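/- arXiv:2412.03444 — 2 statements merged into one kernel-verified Lean document; each statement's English description precedes it below -/
import Mathlib

section
/- Let ρ and σ be positive definite d×d density matrices, and let α ∈ (0,1) and z ∈ (0,1). Then the set { F_{α,z}(ρ, UσU*) : U a d×d unitary matrix } is exactly the closed interval [F_α^C(λ↓(ρ), λ↑(σ)), F_α^C(λ↓(ρ), λ↓(σ))]. -/
open Matrix
open scoped ComplexOrder

/-- Real power of a (Hermitian) matrix via functional calculus on eigenvalues,
with `(0:ℝ) ^ t = 0` for `t ≠ 0`. Returns `0` on non-Hermitian input. -/
noncomputable def mpow {d : ℕ} (A : Matrix (Fin d) (Fin d) ℂ) (t : ℝ) :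
    Matrix (Fin d) (Fin d) ℂ :=
  if hA : A.IsHermitian then
    (hA.eigenvectorUnitary : Matrix (Fin d) (Fin d) ℂ) *
      Matrix.diagonal (fun i => ((hA.eigenvalues i ^ t : ℝ) : ℂ)) *
      (star (hA.eigenvectorUnitary : Matrix (Fin d) (Fin d) ℂ))
  else 0

/-- The quantum α-z-fidelity
`F_{α,z}(ρ,σ) = (Tr[(σ^{(1-α)/(2z)} ρ^{α/z} σ^{(1-α)/(2z)})^z])^{1/α}`. -/
noncomputable def Faz {d : ℕ} (ρ σ : Matrix (Fin d) (Fin d) ℂ) (α z : ℝ) : ℝ :=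
  ((mpow (mpow σ ((1 - α) / (2 * z)) * mpow ρ (α / z) * mpow σ ((1 - α) / (2 * z))) z).trace.re)
    ^ (1 / α)

/-- The classical α-fidelity `F_α^C(p,q) = (Σ_i p_i^α q_i^{1-α})^{1/α}`. -/
noncomputable def FazC {d : ℕ} (p q : Fin d → ℝ) (α : ℝ) : ℝ :=
  (∑ i, p i ^ α * q i ^ (1 - α)) ^ (1 / α)

/-- The vector `p` rearranged in increasing order. -/
noncomputable def sortUp {d : ℕ} (p : Fin d → ℝ) : Fin d → ℝ :=
  p ∘ Tuple.sort p

/-- The vector `p` rearranged in decreasing order. -/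
noncomputable def sortDown {d : ℕ} (p : Fin d → ℝ) : Fin d → ℝ :=
  fun i => sortUp p i.rev

/-- `λ↑(A)`: the eigenvalues of a Hermitian matrix in increasing order. -/
noncomputable def eigUp {d : ℕ} {A : Matrix (Fin d) (Fin d) ℂ} (hA : A.IsHermitian) :
    Fin d → ℝ := sortUp hA.eigenvalues

/-- `λ↓(A)`: the eigenvalues of a Hermitian matrix in decreasing order. -/
noncomputable def eigDown {d : ℕ} {A : Matrix (Fin d) (Fin d) ℂ} (hA : A.IsHermitian) :
    Fin d → ℝ := sortDown hA.eigenvalues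

/-!
By Klein's inequality, `t ↦ Tr (N t ^ z)` has derivative `z Tr (N t ^ (z - 1) N' t)`. Along the
unitary orbit of `A = ρ ^ α`, with `B = σ ^ (1 - α)`, this makes every extremum of the trace a
point where the conjugate of `A` commutes with `B`. There the trace is `a ⬝ᵥ D *ᵥ b`, where `a` and
`b` are the eigenvalues and `D` is doubly stochastic, so Birkhoff's theorem and the rearrangement
inequality bound it by the two sorted pairings, both of which are attained. The values in between
are attained because the unitary group is connected.
-/

section RealAnalysis

lemma mul_sub_le_sub_of_convexOn {s : Set ℝ} {f : ℝ → ℝ} {f' x y : ℝ} (hf : ConvexOn ℝ s f)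
    (hx : x ∈ s) (hy : y ∈ s) (hf' : HasDerivAt f f' y) : f' * (x - y) ≤ f x - f y := by
  rcases lt_trichotomy x y with hxy | rfl | hxy
  · have hslope := hf.slope_le_of_hasDerivAt hx hy hxy hf'
    rw [slope_def_field, div_le_iff₀ (sub_pos.2 hxy)] at hslope
    linarith
  · simp
  · have hslope := hf.le_slope_of_hasDerivAt hy hx hxy hf'
    rwa [slope_def_field, le_div_iff₀ (sub_pos.2 hxy)] at hslope

lemma hasDerivAt_of_le_of_le {f l u : ℝ → ℝ} {f' t₀ : ℝ} (hl : HasDerivAt l f' t₀)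
    (hu : HasDerivAt u f' t₀) (hlf : ∀ᶠ t in nhds t₀, l t ≤ f t)
    (hfu : ∀ᶠ t in nhds t₀, f t ≤ u t) (hl₀ : l t₀ = f t₀) (hu₀ : u t₀ = f t₀) :
    HasDerivAt f f' t₀ := by
  rw [hasDerivAt_iff_isLittleO, Asymptotics.isLittleO_iff] at *
  intro c hc
  filter_upwards [hl hc, hu hc, hlf, hfu] with t hlt hut hlft hfut
  rw [Real.norm_eq_abs, smul_eq_mul, abs_le] at *
  rw [hl₀] at hlt
  rw [hu₀] at hut
  exact ⟨by linarith, by linarith⟩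

lemma hasDerivAt_mul_of_eq_zero {R : Type*} [NormedRing R] [NormedAlgebra ℝ R] {c g : ℝ → R}
    {g' : R} {t₀ : ℝ} (hc : ContinuousAt c t₀) (hg : HasDerivAt g g' t₀) (hg₀ : g t₀ = 0) :
    HasDerivAt (fun t => c t * g t) (c t₀ * g') t₀ := by
  rw [hasDerivAt_iff_tendsto_slope_zero] at hg ⊢
  have hc' : Filter.Tendsto (fun t => c (t₀ + t)) (nhdsWithin 0 {0}ᶜ) (nhds (c t₀)) := by
    have h : ContinuousAt (fun t => c (t₀ + t)) 0 :=
      ContinuousAt.comp (by rwa [add_zero]) (by fun_prop)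
    simpa only [add_zero] using h.tendsto.mono_left nhdsWithin_le_nhds
  refine (hc'.mul hg).congr fun t => ?_
  rw [hg₀, mul_zero, sub_zero, sub_zero, mul_smul_comm]

lemma convexOn_rpow_of_nonpos {z : ℝ} (hz : z ≤ 0) :
    ConvexOn ℝ (Set.Ioi 0) fun x : ℝ => x ^ z := by
  have hlog : ConvexOn ℝ (Set.Ioi 0) fun x : ℝ => -z * -Real.log x :=
    strictConcaveOn_log_Ioi.concaveOn.neg.smul (neg_nonneg.2 hz)
  have hexp : ConvexOn ℝ ((fun x : ℝ => -z * -Real.log x) '' Set.Ioi 0) Real.exp :=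
    convexOn_exp.subset (Set.subset_univ _)
      ((convex_Ioi 0).isPreconnected.image _ (hlog.continuousOn isOpen_Ioi)).ordConnected.convex
  refine (hexp.comp hlog (Real.exp_monotone.monotoneOn _)).congr fun x hx => ?_
  rw [Function.comp_apply, neg_mul_neg, mul_comm, ← Real.rpow_def_of_pos hx]

lemma exists_convexOn_const_mul_rpow (z : ℝ) :
    ∃ c : ℝ, c ≠ 0 ∧ ConvexOn ℝ (Set.Ioi 0) fun x : ℝ => c * x ^ z := by
  rcases le_total z 0 with hz₀ | hz₀
  · exact ⟨1, one_ne_zero, by simpa only [one_mul] using convexOn_rpow_of_nonpos hz₀⟩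
  have hsubset : Set.Ioi (0 : ℝ) ⊆ Set.Ici 0 := Set.Ioi_subset_Ici_self
  rcases le_total z 1 with hz₁ | hz₁
  · refine ⟨-1, by norm_num, ?_⟩
    simp only [neg_one_mul]
    exact ((Real.concaveOn_rpow hz₀ hz₁).subset hsubset (convex_Ioi 0)).neg
  · refine ⟨1, one_ne_zero, ?_⟩
    simpa only [one_mul] using (convexOn_rpow hz₁).subset hsubset (convex_Ioi 0)

lemma monotone_or_antitone_rpow {ι : Type*} [Preorder ι] {p : ι → ℝ} (hpos : ∀ i, 0 < p i)
    (hp : Monotone p ∨ Antitone p) (t : ℝ) :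
    Monotone (fun i => p i ^ t) ∨ Antitone fun i => p i ^ t := by
  rcases le_total 0 t with ht | ht
  · have hpow (i j : ι) (hij : p i ≤ p j) : p i ^ t ≤ p j ^ t :=
      Real.rpow_le_rpow (hpos i).le hij ht
    exact hp.imp (fun hp i j hij => hpow _ _ (hp hij)) fun hp i j hij => hpow _ _ (hp hij)
  · have hpow (i j : ι) (hij : p i ≤ p j) : p j ^ t ≤ p i ^ t :=
      Real.rpow_le_rpow_of_nonpos (hpos i) hij ht
    exact hp.symm.imp (fun hp i j hij => hpow _ _ (hp hij)) fun hp i j hij => hpow _ _ (hp hij)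

lemma image_rpow_uIcc {x y : ℝ} (hx : 0 < x) (hy : 0 < y) (t : ℝ) :
    (fun r : ℝ => r ^ t) '' Set.uIcc x y = Set.uIcc (x ^ t) (y ^ t) := by
  have hpos : Set.uIcc x y ⊆ Set.Ioi 0 := Set.ordConnected_Ioi.uIcc_subset hx hy
  have hcont : ContinuousOn (fun r : ℝ => r ^ t) (Set.uIcc x y) := fun r hr =>
    (Real.continuousAt_rpow_const r t (.inl (hpos hr).ne')).continuousWithinAt
  rcases le_total 0 t with ht | ht
  · exact hcont.image_uIcc_of_monotoneOn
      ((Real.monotoneOn_rpow_Ici_of_exponent_nonneg ht).mono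
        (hpos.trans Set.Ioi_subset_Ici_self))
  · exact hcont.image_uIcc_of_antitoneOn
      ((Real.antitoneOn_rpow_Ioi_of_exponent_nonpos ht).mono hpos)

lemma sum_rpow_mul_rpow_pos {ι : Type*} [Fintype ι] [Nonempty ι] {p q : ι → ℝ}
    (hp : ∀ i, 0 < p i) (hq : ∀ i, 0 < q i) (s t : ℝ) : 0 < ∑ i, p i ^ s * q i ^ t :=
  Finset.sum_pos (fun i _ => mul_pos (Real.rpow_pos_of_pos (hp i) _)
    (Real.rpow_pos_of_pos (hq i) _)) Finset.univ_nonempty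

end RealAnalysis

section DoublyStochastic

variable {n : Type*} [Fintype n] [DecidableEq n]

lemma dotProduct_mulVec_le_of_forall_perm {D : Matrix n n ℝ} (hD : D ∈ doublyStochastic ℝ n)
    {x y : n → ℝ} {c : ℝ} (h : ∀ σ : Equiv.Perm n, ∑ i, x i * y (σ i) ≤ c) :
    x ⬝ᵥ D *ᵥ y ≤ c := by
  have hconvex : Convex ℝ {D : Matrix n n ℝ | x ⬝ᵥ D *ᵥ y ≤ c} :=
    convex_halfSpace_le
      ⟨fun M N => by rw [add_mulVec, dotProduct_add],
        fun r M => by rw [smul_mulVec, dotProduct_smul]⟩ c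
  have hperm : {D : Matrix n n ℝ | ∃ σ : Equiv.Perm n, σ.permMatrix ℝ = D} ⊆
      {D : Matrix n n ℝ | x ⬝ᵥ D *ᵥ y ≤ c} := by
    rintro _ ⟨σ, rfl⟩
    exact (congrArg (x ⬝ᵥ ·) (permMatrix_mulVec σ)).trans_le (h σ)
  rw [← SetLike.mem_coe, doublyStochastic_eq_convexHull_permMatrix] at hD
  exact convexHull_min hperm hconvex hD

lemma dotProduct_mulVec_le_of_monovary {D : Matrix n n ℝ} (hD : D ∈ doublyStochastic ℝ n)
    {x y : n → ℝ} (h : Monovary x y) : x ⬝ᵥ D *ᵥ y ≤ x ⬝ᵥ y :=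
  dotProduct_mulVec_le_of_forall_perm hD fun _ => h.sum_mul_comp_perm_le_sum_mul

lemma le_dotProduct_mulVec_of_antivary {D : Matrix n n ℝ} (hD : D ∈ doublyStochastic ℝ n)
    {x y : n → ℝ} (h : Antivary x y) : x ⬝ᵥ y ≤ x ⬝ᵥ D *ᵥ y := by
  have hneg := dotProduct_mulVec_le_of_monovary hD h.neg_left
  rwa [neg_dotProduct, neg_dotProduct, neg_le_neg_iff] at hneg

end DoublyStochastic

section Unistochastic

variable {n 𝕜 : Type*} [DecidableEq n] [RCLike 𝕜]

/-- The matrix `(‖U i j‖ ^ 2)` of squared moduli. When `U` is the change of basis between two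
orthonormal eigenbases, its entries are the transition probabilities. -/
def sqNormMatrix (U : Matrix n n 𝕜) : Matrix n n ℝ :=
  U.map fun u => ‖u‖ ^ 2

lemma sqNormMatrix_one : sqNormMatrix (1 : Matrix n n 𝕜) = 1 :=
  Matrix.map_one _ (by rw [norm_zero, zero_pow two_ne_zero]) (by rw [norm_one, one_pow])

variable [Fintype n]

lemma sum_sqNormMatrix_row (U : unitaryGroup n 𝕜) (i : n) :
    ∑ j, sqNormMatrix (U : Matrix n n 𝕜) i j = 1 := by
  have h : ((U : Matrix n n 𝕜) * star (U : Matrix n n 𝕜)) i i = 1 := by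
    rw [Unitary.mul_star_self_of_mem U.2, one_apply_eq]
  simp only [mul_apply, star_apply, RCLike.star_def, RCLike.mul_conj] at h
  exact_mod_cast h

lemma sqNormMatrix_mem_doublyStochastic (U : unitaryGroup n 𝕜) :
    sqNormMatrix (U : Matrix n n 𝕜) ∈ doublyStochastic ℝ n := by
  refine mem_doublyStochastic_iff_sum.2
    ⟨fun i j => sq_nonneg _, sum_sqNormMatrix_row U, fun j => ?_⟩
  simpa only [sqNormMatrix, map_apply, Unitary.coe_star, star_apply, norm_star] using
    sum_sqNormMatrix_row (star U) j

end Unistochastic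

section ReTrace

variable {n 𝕜 : Type*} [Fintype n] [RCLike 𝕜]

variable (n 𝕜) in
/-- The real part of the trace, as a real linear functional. -/
noncomputable def reTrace : Matrix n n 𝕜 →ₗ[ℝ] ℝ :=
  RCLike.reLm ∘ₗ traceLinearMap n ℝ 𝕜

lemma reTrace_apply (X : Matrix n n 𝕜) : reTrace n 𝕜 X = RCLike.re X.trace := rfl

lemma reTrace_mul_comm (X Y : Matrix n n 𝕜) : reTrace n 𝕜 (X * Y) = reTrace n 𝕜 (Y * X) := by
  rw [reTrace_apply, trace_mul_comm, reTrace_apply]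

lemma reTrace_unitary_conj [DecidableEq n] (u : unitaryGroup n 𝕜) (X : Matrix n n 𝕜) :
    reTrace n 𝕜 ((u : Matrix n n 𝕜) * X * star (u : Matrix n n 𝕜)) = reTrace n 𝕜 X := by
  rw [reTrace_mul_comm, ← mul_assoc, Unitary.coe_star_mul_self, one_mul]

lemma commute_of_forall_skewAdjoint {A B : Matrix n n 𝕜}
    (hA : A.IsHermitian) (hB : B.IsHermitian)
    (h : ∀ K ∈ skewAdjoint (Matrix n n 𝕜), reTrace n 𝕜 (B * (K * A - A * K)) = 0) :
    Commute A B := by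
  set K := A * B - B * A with hK
  have hskew : star K = -K := by
    simp only [hK, star_sub, star_mul, star_eq_conjTranspose, hA.eq, hB.eq, neg_sub]
  have htrace : (B * (K * A - A * K)).trace = -(star K * K).trace := by
    rw [hskew, neg_mul, trace_neg, neg_neg, mul_sub, trace_sub, ← mul_assoc, trace_mul_comm,
      ← mul_assoc, ← mul_assoc, ← trace_sub, ← sub_mul]
  have hre : RCLike.re (star K * K).trace = 0 := by
    simpa only [reTrace_apply, htrace, map_neg, neg_eq_zero] using h K hskew
  have hnonneg : 0 ≤ (star K * K).trace := (posSemidef_conjTranspose_mul_self K).trace_nonneg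
  have hzero : (star K * K).trace = 0 :=
    RCLike.ext (by rw [hre, map_zero]) (by rw [(RCLike.nonneg_iff.1 hnonneg).2, map_zero])
  exact sub_eq_zero.1 (trace_conjTranspose_mul_self_eq_zero_iff.1 hzero)

end ReTrace

section Spectral

open Unitary

variable {n 𝕜 : Type*} [Fintype n] [DecidableEq n] [RCLike 𝕜]

/-- The Hermitian matrix with eigenvalues `a` whose eigenvectors are the columns of `V`. -/
noncomputable def spectralMatrix (V : unitaryGroup n 𝕜) (a : n → ℝ) : Matrix n n 𝕜 :=
  conjStarAlgAut 𝕜 _ V (diagonal (RCLike.ofReal ∘ a))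

lemma spectralMatrix_conj (U V : unitaryGroup n 𝕜) (a : n → ℝ) :
    (U : Matrix n n 𝕜) * spectralMatrix V a * star (U : Matrix n n 𝕜) =
      spectralMatrix (U * V) a := by
  rw [← conjStarAlgAut_apply (S := 𝕜), spectralMatrix, ← conjStarAlgAut_mul_apply, spectralMatrix]

lemma spectralMatrix_mul (V : unitaryGroup n 𝕜) (a b : n → ℝ) :
    spectralMatrix V a * spectralMatrix V b = spectralMatrix V (a * b) := by
  rw [spectralMatrix, spectralMatrix, ← map_mul, diagonal_mul_diagonal, spectralMatrix]
  congr 2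
  ext i
  simp

lemma commute_spectralMatrix (V : unitaryGroup n 𝕜) (a b : n → ℝ) :
    Commute (spectralMatrix V a) (spectralMatrix V b) := by
  rw [commute_iff_eq, spectralMatrix_mul, spectralMatrix_mul, mul_comm]

lemma permMatrix_mem_unitaryGroup (π : Equiv.Perm n) : π.permMatrix 𝕜 ∈ unitaryGroup n 𝕜 := by
  rw [mem_unitaryGroup_iff, star_eq_conjTranspose, conjTranspose_permMatrix, ← permMatrix_mul,
    inv_mul_cancel, permMatrix_one]

lemma permMatrix_mul_diagonal_mul_conjTranspose (π : Equiv.Perm n) (a : n → 𝕜) :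
    π.permMatrix 𝕜 * diagonal a * (π.permMatrix 𝕜)ᴴ = diagonal (a ∘ π) := by
  rw [conjTranspose_permMatrix, Equiv.Perm.permMatrix, PEquiv.toMatrix_toPEquiv_mul,
    Equiv.Perm.permMatrix, PEquiv.mul_toMatrix_toPEquiv, submatrix_submatrix]
  exact submatrix_diagonal_equiv a π

lemma exists_spectralMatrix_comp_perm (V : unitaryGroup n 𝕜) (a : n → ℝ) (π : Equiv.Perm n) :
    ∃ W : unitaryGroup n 𝕜, spectralMatrix W (a ∘ π) = spectralMatrix V a := by
  let P : unitaryGroup n 𝕜 := ⟨π.permMatrix 𝕜, permMatrix_mem_unitaryGroup π⟩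
  have hP : conjStarAlgAut 𝕜 _ P (diagonal (RCLike.ofReal ∘ a)) =
      diagonal (RCLike.ofReal ∘ a ∘ π) :=
    permMatrix_mul_diagonal_mul_conjTranspose π _
  refine ⟨V * P⁻¹, ?_⟩
  rw [spectralMatrix, ← hP, ← conjStarAlgAut_mul_apply, inv_mul_cancel_right, spectralMatrix]

lemma reTrace_spectralMatrix_mul (V W : unitaryGroup n 𝕜) (a b : n → ℝ) :
    reTrace n 𝕜 (spectralMatrix V a * spectralMatrix W b) =
      a ⬝ᵥ sqNormMatrix ((star V * W : unitaryGroup n 𝕜) : Matrix n n 𝕜) *ᵥ b := by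
  set Q : Matrix n n 𝕜 := ((star V * W : unitaryGroup n 𝕜) : Matrix n n 𝕜) with hQ
  set Da : Matrix n n 𝕜 := diagonal (RCLike.ofReal ∘ a)
  set Db : Matrix n n 𝕜 := diagonal (RCLike.ofReal ∘ b)
  have htrace : reTrace n 𝕜 (spectralMatrix V a * spectralMatrix W b) =
      reTrace n 𝕜 (Da * Q * (Db * star Q)) := by
    rw [spectralMatrix, spectralMatrix, conjStarAlgAut_apply, conjStarAlgAut_apply, mul_assoc,
      mul_assoc, reTrace_mul_comm]
    simp only [hQ, Submonoid.coe_mul, Unitary.coe_star, star_mul, star_star, mul_assoc, Da, Db]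
  have hentry (i j : n) : (Da * Q) i j * (Db * star Q) j i =
      ((a i * (sqNormMatrix Q i j * b j) : ℝ) : 𝕜) := by
    rw [diagonal_mul, diagonal_mul, star_apply, RCLike.star_def, mul_mul_mul_comm,
      RCLike.mul_conj]
    simp only [sqNormMatrix, map_apply, Function.comp_apply]
    push_cast
    ring
  simp only [htrace, reTrace_apply, trace, diag_apply, mul_apply (M := Da * Q), hentry, map_sum,
    RCLike.ofReal_re, dotProduct, mulVec, Finset.mul_sum]

end Spectral

section TraceInequalities

variable {n 𝕜 : Type*} [Fintype n] [DecidableEq n] [RCLike 𝕜]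

lemma cfc_eq_spectralMatrix {A : Matrix n n 𝕜} (hA : A.IsHermitian) (f : ℝ → ℝ) :
    cfc f A = spectralMatrix hA.eigenvectorUnitary (f ∘ hA.eigenvalues) :=
  hA.cfc_eq f

lemma reTrace_cfc_mul_cfc {A B : Matrix n n 𝕜} (hA : A.IsHermitian) (hB : B.IsHermitian)
    (f g : ℝ → ℝ) :
    reTrace n 𝕜 (cfc f A * cfc g B) =
      ∑ i, ∑ j, f (hA.eigenvalues i) * g (hB.eigenvalues j) *
        sqNormMatrix ((star hA.eigenvectorUnitary * hB.eigenvectorUnitary : unitaryGroup n 𝕜) :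
          Matrix n n 𝕜) i j := by
  rw [cfc_eq_spectralMatrix hA, cfc_eq_spectralMatrix hB, reTrace_spectralMatrix_mul]
  simp only [dotProduct, mulVec, Finset.mul_sum, Function.comp_apply]
  exact Finset.sum_congr rfl fun i _ => Finset.sum_congr rfl fun j _ => by ring

lemma sum_reTrace_cfc_mul_cfc_nonneg {ι : Type*} [Fintype ι] {A B : Matrix n n 𝕜}
    (hA : A.IsHermitian) (hB : B.IsHermitian) (f g : ι → ℝ → ℝ)
    (h : ∀ x ∈ spectrum ℝ A, ∀ y ∈ spectrum ℝ B, 0 ≤ ∑ k, f k x * g k y) :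
    0 ≤ ∑ k, reTrace n 𝕜 (cfc (f k) A * cfc (g k) B) := by
  simp only [reTrace_cfc_mul_cfc hA hB]
  rw [Finset.sum_comm]
  refine Finset.sum_nonneg fun i _ => ?_
  rw [Finset.sum_comm]
  refine Finset.sum_nonneg fun j _ => ?_
  rw [← Finset.sum_mul]
  exact mul_nonneg (h _ (hA.eigenvalues_mem_spectrum_real i) _ (hB.eigenvalues_mem_spectrum_real j))
    (sq_nonneg _)

theorem klein_inequality {s : Set ℝ} {f f' : ℝ → ℝ} (hf : ConvexOn ℝ s f) {A B : Matrix n n 𝕜}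
    (hA : A.IsHermitian) (hB : B.IsHermitian) (hAs : spectrum ℝ A ⊆ s) (hBs : spectrum ℝ B ⊆ s)
    (hf' : ∀ x ∈ spectrum ℝ B, HasDerivAt f (f' x) x) :
    reTrace n 𝕜 (cfc f' B * (A - B)) ≤ reTrace n 𝕜 (cfc f A) - reTrace n 𝕜 (cfc f B) := by
  have hone {X : Matrix n n 𝕜} (hX : X.IsHermitian) : cfc (fun _ : ℝ => (1 : ℝ)) X = 1 :=
    cfc_const_one ℝ X hX
  have hid {X : Matrix n n 𝕜} (hX : X.IsHermitian) : cfc (fun x : ℝ => x) X = X :=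
    cfc_id' ℝ X hX
  have hmul : cfc (fun x => f' x * x) B = cfc f' B * B := by
    rw [cfc_mul f' (fun x => x) B (B.finite_real_spectrum.continuousOn _), hid hB]
  have hpointwise := sum_reTrace_cfc_mul_cfc_nonneg hA hB
    ![f, fun _ => 1, fun x => x, fun _ => 1]
    ![fun _ => 1, fun y => -f y, fun y => -f' y, fun y => f' y * y] fun x hx y hy => by
      have htangent := mul_sub_le_sub_of_convexOn hf (hAs hx) (hBs hy) (hf' y hy)
      simp only [Fin.sum_univ_four, cons_val]
      linarith
  simp only [Fin.sum_univ_four, cons_val, hone hA, hone hB, hid hA, hmul, cfc_neg, mul_neg,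
    mul_one, one_mul, map_neg] at hpointwise
  rw [mul_sub, map_sub, reTrace_mul_comm _ A]
  linarith

end TraceInequalities

section TraceDerivative

open scoped Matrix.Norms.L2Operator

variable {n : Type*} [Fintype n]

lemma hasDerivAt_reTrace {X : ℝ → Matrix n n ℂ} {X' : Matrix n n ℂ} {t₀ : ℝ}
    (hX : HasDerivAt X X' t₀) : HasDerivAt (fun t => reTrace n ℂ (X t)) (reTrace n ℂ X') t₀ := by
  classical
  exact (LinearMap.toContinuousLinearMap (reTrace n ℂ)).hasFDerivAt.comp_hasDerivAt t₀ hX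

variable [DecidableEq n]

/- Klein's inequality at `(N t, N t₀)` and at `(N t₀, N t)` squeezes the trace between two functions
with the same value and derivative at `t₀`. -/
theorem hasDerivAt_reTrace_cfc {s : Set ℝ} {f f' : ℝ → ℝ} (hf : ConvexOn ℝ s f)
    (hf' : ∀ x ∈ s, HasDerivAt f (f' x) x) {N : ℝ → Matrix n n ℂ} {N' : Matrix n n ℂ} {t₀ : ℝ}
    (hherm : ∀ t, (N t).IsHermitian) (hspec : ∀ t, spectrum ℝ (N t) ⊆ s)
    (hcont : ContinuousAt (fun t => cfc f' (N t)) t₀) (hN : HasDerivAt N N' t₀) :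
    HasDerivAt (fun t => reTrace n ℂ (cfc f (N t))) (reTrace n ℂ (cfc f' (N t₀) * N')) t₀ := by
  have hdiff : HasDerivAt (fun t => N t - N t₀) N' t₀ := hN.sub_const _
  have hlower := (hasDerivAt_reTrace (hdiff.const_mul (cfc f' (N t₀)))).const_add
    (reTrace n ℂ (cfc f (N t₀)))
  have hupper := (hasDerivAt_reTrace (hasDerivAt_mul_of_eq_zero hcont hdiff (sub_self _))).const_add
    (reTrace n ℂ (cfc f (N t₀)))
  refine hasDerivAt_of_le_of_le hlower hupper (.of_forall fun t => ?_) (.of_forall fun t => ?_)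
    (by simp) (by simp)
  · have hklein := klein_inequality hf (hherm t) (hherm t₀) (hspec t) (hspec t₀)
      fun x hx => hf' x (hspec t₀ hx)
    linarith
  · have hklein := klein_inequality hf (hherm t₀) (hherm t) (hspec t₀) (hspec t)
      fun x hx => hf' x (hspec t hx)
    rw [← neg_sub (N t), mul_neg, map_neg] at hklein
    linarith

end TraceDerivative

section TraceRpow

open scoped Matrix.Norms.L2Operator MatrixOrder

variable {n : Type*} [Fintype n] [DecidableEq n]

lemma rpow_eq_cfc {A : Matrix n n ℂ} (hA : A.PosDef) (t : ℝ) :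
    A ^ t = cfc (fun x : ℝ => x ^ t) A :=
  CFC.rpow_eq_cfc_real (nonneg_iff_posSemidef.2 hA.posSemidef)

lemma posDef_rpow {A : Matrix n n ℂ} (hA : A.PosDef) (t : ℝ) : (A ^ t).PosDef :=
  isStrictlyPositive_iff_posDef.1 (.rpow _ _ (isStrictlyPositive_iff_posDef.2 hA))

lemma cfc_const_mul_rpow {A : Matrix n n ℂ} (hA : A.PosDef) (c t : ℝ) :
    cfc (fun x : ℝ => c * x ^ t) A = c • A ^ t := by
  rw [rpow_eq_cfc hA, cfc_const_mul c _ A (A.finite_real_spectrum.continuousOn _)]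

lemma continuousAt_rpow_of_posDef {X : Type*} [TopologicalSpace X] {N : X → Matrix n n ℂ} {x₀ : X}
    (hpos : ∀ x, (N x).PosDef) (hN : ContinuousAt N x₀) (t : ℝ) :
    ContinuousAt (fun x => N x ^ t) x₀ := by
  have hpos' (x : X) : IsStrictlyPositive (N x) := isStrictlyPositive_iff_posDef.2 (hpos x)
  exact (CFC.continuousOn_rpow t (N x₀) (hpos' x₀)).tendsto.comp
    (tendsto_nhdsWithin_iff.2 ⟨hN, .of_forall hpos'⟩)

lemma spectrum_subset_Ioi {A : Matrix n n ℂ} (hA : A.PosDef) : spectrum ℝ A ⊆ Set.Ioi 0 := by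
  rw [hA.isHermitian.spectrum_real_eq_range_eigenvalues]
  exact Set.range_subset_iff.2 hA.eigenvalues_pos

theorem hasDerivAt_reTrace_rpow {N : ℝ → Matrix n n ℂ} {N' : Matrix n n ℂ} {t₀ : ℝ}
    (hpos : ∀ t, (N t).PosDef) (hN : HasDerivAt N N' t₀) (z : ℝ) :
    HasDerivAt (fun t => reTrace n ℂ (N t ^ z)) (z * reTrace n ℂ (N t₀ ^ (z - 1) * N')) t₀ := by
  obtain ⟨c, hc, hconvex⟩ := exists_convexOn_const_mul_rpow z
  have hderiv (x : ℝ) (hx : x ∈ Set.Ioi 0) :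
      HasDerivAt (fun x : ℝ => c * x ^ z) (c * z * x ^ (z - 1)) x := by
    simpa only [mul_assoc] using (Real.hasDerivAt_rpow_const (Or.inl (ne_of_gt hx))).const_mul c
  have hcont : ContinuousAt (fun t => cfc (fun x : ℝ => c * z * x ^ (z - 1)) (N t)) t₀ := by
    simp only [cfc_const_mul_rpow (hpos _)]
    exact (continuousAt_rpow_of_posDef hpos hN.continuousAt (z - 1)).const_smul (c * z)
  have h := hasDerivAt_reTrace_cfc hconvex hderiv (fun t => (hpos t).isHermitian)
    (fun t => spectrum_subset_Ioi (hpos t)) hcont hN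
  simp only [cfc_const_mul_rpow (hpos _), map_smul, smul_mul_assoc, smul_eq_mul] at h
  simpa only [mul_assoc, inv_mul_cancel_left₀ hc] using h.const_mul c⁻¹

end TraceRpow

section CommutingPowers

variable {R : Type*} [CStarAlgebra R] [PartialOrder R] [StarOrderedRing R] {a b s : R}

lemma commute_rpow_left (h : Commute a b) (t : ℝ) : Commute (a ^ t) b :=
  h.cfc_nnreal _

lemma rpow_rpow_of_isStrictlyPositive (ha : IsStrictlyPositive a) (s t : ℝ) :
    (a ^ s) ^ t = a ^ (s * t) := by
  rcases eq_or_ne s 0 with rfl | hs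
  · rw [zero_mul, CFC.rpow_zero a, CFC.one_rpow]
  · exact CFC.rpow_rpow a s t hs

lemma commute_of_commute_rpow_left {t : ℝ} (ha : IsStrictlyPositive a) (ht : t ≠ 0)
    (h : Commute (a ^ t) b) : Commute a b := by
  simpa only [CFC.rpow_rpow_inv a t ht] using commute_rpow_left h t⁻¹

lemma mul_self_eq_rpow_two (ha : 0 ≤ a) : a * a = a ^ (2 : ℝ) := by
  rw [← sq, ← CFC.rpow_natCast a 2, Nat.cast_ofNat]

/- With `N = s * a * s`, the hypothesis says that `s ^ 2` commutes with `N ^ (t + 1)`, hence with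
`N`; then so does `s`, which can be cancelled. -/
lemma commute_of_commute_mul_rpow_mul {t : ℝ} (ha : IsStrictlyPositive (s * a * s))
    (hs : IsStrictlyPositive s) (ht : t + 1 ≠ 0) (h : Commute a (s * (s * a * s) ^ t * s)) :
    Commute a s := by
  have hleft : s * a * s * (s * a * s) ^ t = (s * a * s) ^ (t + 1) := by
    rw [add_comm, CFC.rpow_add ha.isUnit, CFC.rpow_one _]
  have hright : (s * a * s) ^ t * (s * a * s) = (s * a * s) ^ (t + 1) := by
    rw [CFC.rpow_add ha.isUnit, CFC.rpow_one _]
  have hpow : Commute ((s * a * s) ^ (t + 1)) (s * s) :=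
    calc (s * a * s) ^ (t + 1) * (s * s) = s * (a * (s * (s * a * s) ^ t * s)) * s := by
          rw [← hleft]; simp only [mul_assoc]
      _ = s * (s * (s * a * s) ^ t * s * a) * s := by rw [h.eq]
      _ = s * s * (s * a * s) ^ (t + 1) := by rw [← hright]; simp only [mul_assoc]
  have hsq : Commute (s ^ (2 : ℝ)) (s * a * s) := by
    rw [← mul_self_eq_rpow_two hs.nonneg]
    exact (commute_of_commute_rpow_left ha ht hpow).symm
  have hcomm : s * (s * a * s) = s * a * s * s :=
    commute_of_commute_rpow_left hs two_ne_zero hsq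
  refine (hs.isUnit.mul_left_cancel (hs.isUnit.mul_right_cancel ?_)).symm
  simpa only [mul_assoc] using hcomm

lemma exp_rpow (ha : IsSelfAdjoint a) (t : ℝ) :
    NormedSpace.exp a ^ t = NormedSpace.exp (t • a) := by
  rw [← CFC.real_exp_eq_normedSpace_exp (a := a), CFC.cfc_rpow fun x _ => Real.exp_pos x,
    ← CFC.real_exp_eq_normedSpace_exp (a := t • a), ← cfc_comp_smul t Real.exp a]
  simp only [smul_eq_mul, mul_comm t, Real.exp_mul]

lemma mul_rpow_of_commute (ha : IsStrictlyPositive a) (hb : IsStrictlyPositive b)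
    (h : Commute a b) (t : ℝ) : (a * b) ^ t = a ^ t * b ^ t := by
  let _ : NormedAlgebra ℚ R := .restrictScalars ℚ ℝ R
  have hlog : Commute (CFC.log a) (CFC.log b) := ((h.cfc_real _).symm.cfc_real _).symm
  have hpow {x : R} (hx : IsStrictlyPositive x) : x ^ t = NormedSpace.exp (t • CFC.log x) := by
    rw [← exp_rpow .log, CFC.exp_log x]
  rw [hpow ha, hpow hb, ← NormedSpace.exp_add_of_commute ((hlog.smul_left t).smul_right t),
    ← smul_add, ← exp_rpow (IsSelfAdjoint.log.add .log), NormedSpace.exp_add_of_commute hlog,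
    CFC.exp_log a, CFC.exp_log b]

lemma mul_mul_rpow_of_commute (ha : IsStrictlyPositive a) (hs : IsStrictlyPositive s)
    (h : Commute a s) (t : ℝ) : (s * a * s) ^ t = a ^ t * s ^ (2 * t) := by
  have hs₂ : IsStrictlyPositive (s ^ (2 : ℝ)) := .rpow s 2
  have ha₂ : Commute a (s ^ (2 : ℝ)) := (commute_rpow_left h.symm 2).symm
  rw [← h.eq, mul_assoc, mul_self_eq_rpow_two hs.nonneg, mul_rpow_of_commute ha hs₂ ha₂,
    rpow_rpow_of_isStrictlyPositive hs]

end CommutingPowers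

section UnitaryCurve

variable {R : Type*} [CStarAlgebra R]

lemma exists_unitary_curve_hasDerivAt {k : R} (hk : k ∈ skewAdjoint R) (a : R) :
    ∃ γ : ℝ → unitary R, Continuous γ ∧ γ 0 = 1 ∧
      HasDerivAt (fun t => (γ t : R) * a * star (γ t : R)) (k * a - a * k) 0 := by
  let _ : NormedAlgebra ℚ R := .restrictScalars ℚ ℝ R
  have hstar (t : ℝ) : star (NormedSpace.exp (t • k)) = NormedSpace.exp (t • -k) := by
    rw [NormedSpace.star_exp, star_smul, skewAdjoint.mem_iff.1 hk, star_trivial]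
  refine ⟨fun t => ⟨NormedSpace.exp (t • k),
    NormedSpace.exp_mem_unitary_of_mem_skewAdjoint (skewAdjoint.smul_mem t hk)⟩,
    (NormedSpace.exp_continuous.comp (continuous_id.smul continuous_const)).subtype_mk _,
    Subtype.ext (by simp), ?_⟩
  have h := ((hasDerivAt_exp_smul_const (𝕂 := ℝ) k 0).mul_const a).mul
    (hasDerivAt_exp_smul_const (𝕂 := ℝ) (-k) 0)
  simp only [zero_smul, NormedSpace.exp_zero, one_mul, mul_one, mul_neg, ← sub_eq_add_neg] at h
  simp only [hstar]
  exact h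

end UnitaryCurve

section UnitaryOrbits

open scoped Matrix.Norms.L2Operator MatrixOrder

variable {n : Type*} [Fintype n]

lemma posDef_mul_mul_self {𝕜 : Type*} [RCLike 𝕜] {A S : Matrix n n 𝕜} (hA : A.PosDef)
    (hS : S.PosDef) : (S * A * S).PosDef := by
  classical
  simpa only [star_eq_conjTranspose, hS.isHermitian.eq] using
    (IsUnit.posDef_star_right_conjugate_iff hS.isUnit).2 hA

variable [DecidableEq n]

lemma posDef_unitary_conj {𝕜 : Type*} [RCLike 𝕜] {A : Matrix n n 𝕜} (hA : A.PosDef)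
    (u : unitaryGroup n 𝕜) : ((u : Matrix n n 𝕜) * A * star (u : Matrix n n 𝕜)).PosDef :=
  (IsUnit.posDef_star_right_conjugate_iff Unitary.isUnit_coe).2 hA

theorem commute_of_isLocalExtr_reTrace_rpow {A S : Matrix n n ℂ} (hA : A.PosDef) (hS : S.PosDef)
    {z : ℝ} (hz : z ≠ 0)
    (h : IsLocalExtr (fun u : unitaryGroup n ℂ =>
      reTrace n ℂ ((S * ((u : Matrix n n ℂ) * A * star (u : Matrix n n ℂ)) * S) ^ z)) 1) :
    Commute A S := by
  have hSAS := posDef_mul_mul_self hA hS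
  have hpow := posDef_rpow hSAS (z - 1)
  have hcrit (K : Matrix n n ℂ) (hK : K ∈ skewAdjoint (Matrix n n ℂ)) :
      reTrace n ℂ (S * (S * A * S) ^ (z - 1) * S * (K * A - A * K)) = 0 := by
    obtain ⟨γ, hγ, hγ₀, hderiv⟩ := exists_unitary_curve_hasDerivAt hK A
    have hextr : IsLocalExtr (fun t => reTrace n ℂ
        ((S * ((γ t : Matrix n n ℂ) * A * star (γ t : Matrix n n ℂ)) * S) ^ z)) 0 :=
      (hγ₀.symm ▸ h :).comp_tendsto hγ.continuousAt
    have hzero := hextr.hasDerivAt_eq_zero (hasDerivAt_reTrace_rpow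
      (fun t => posDef_mul_mul_self (posDef_unitary_conj hA (γ t)) hS)
      ((hderiv.const_mul S).mul_const S) z)
    rw [hγ₀, OneMemClass.coe_one, one_mul, star_one, mul_one] at hzero
    rw [mul_assoc _ S, mul_assoc S, reTrace_mul_comm, mul_assoc]
    simpa only [mul_assoc] using (mul_eq_zero.1 hzero).resolve_left hz
  refine commute_of_commute_mul_rpow_mul (isStrictlyPositive_iff_posDef.2 hSAS)
    (isStrictlyPositive_iff_posDef.2 hS) (by rwa [sub_add_cancel]) ?_
  exact commute_of_forall_skewAdjoint hA.isHermitian (posDef_mul_mul_self hpow hS).isHermitian hcrit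

end UnitaryOrbits

section ZTrace

open scoped Matrix.Norms.L2Operator MatrixOrder

variable {n : Type*} [Fintype n] [DecidableEq n] {A B : Matrix n n ℂ} {z : ℝ}

/-- The trace functional underlying the `α`-`z`-fidelity, in variables that do not involve `α`:
`zTrace z (ρ ^ α) (σ ^ (1 - α))` is the trace in `F_{α,z}(ρ, σ)`. -/
noncomputable def zTrace (z : ℝ) (A B : Matrix n n ℂ) : ℝ :=
  reTrace n ℂ ((B ^ (2 * z)⁻¹ * A ^ z⁻¹ * B ^ (2 * z)⁻¹) ^ z)

lemma rpow_unitary_conj (hA : A.PosDef) (u : unitaryGroup n ℂ) (t : ℝ) :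
    ((u : Matrix n n ℂ) * A * star (u : Matrix n n ℂ)) ^ t =
      (u : Matrix n n ℂ) * A ^ t * star (u : Matrix n n ℂ) := by
  rw [rpow_eq_cfc hA, rpow_eq_cfc (posDef_unitary_conj hA u)]
  have hcont : Continuous fun X : Matrix n n ℂ =>
      (u : Matrix n n ℂ) * X * star (u : Matrix n n ℂ) := by
    fun_prop
  exact (StarAlgHomClass.map_cfc (Unitary.conjStarAlgAut ℂ (Matrix n n ℂ) u) _ A
    (A.finite_real_spectrum.continuousOn _) hcont hA.isHermitian
    (posDef_unitary_conj hA u).isHermitian).symm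

lemma zTrace_unitary_conj (hA : A.PosDef) (hB : B.PosDef) (z : ℝ) (u : unitaryGroup n ℂ) :
    zTrace z ((u : Matrix n n ℂ) * A * star (u : Matrix n n ℂ))
      ((u : Matrix n n ℂ) * B * star (u : Matrix n n ℂ)) = zTrace z A B := by
  have hpos := posDef_mul_mul_self (posDef_rpow hA z⁻¹) (posDef_rpow hB (2 * z)⁻¹)
  simp only [zTrace, rpow_unitary_conj hA, rpow_unitary_conj hB]
  simp only [← Unitary.conjStarAlgAut_apply (S := ℂ), ← map_mul]
  rw [Unitary.conjStarAlgAut_apply, rpow_unitary_conj hpos, reTrace_unitary_conj]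

lemma zTrace_unitary_conj_right (hA : A.PosDef) (hB : B.PosDef) (z : ℝ) (u : unitaryGroup n ℂ) :
    zTrace z A ((u : Matrix n n ℂ) * B * star (u : Matrix n n ℂ)) =
      zTrace z (((u⁻¹ : unitaryGroup n ℂ) : Matrix n n ℂ) * A *
        star ((u⁻¹ : unitaryGroup n ℂ) : Matrix n n ℂ)) B := by
  rw [← zTrace_unitary_conj (posDef_unitary_conj hA u⁻¹) hB z u]
  simp only [← Unitary.conjStarAlgAut_apply (S := ℂ), ← Unitary.conjStarAlgAut_mul_apply,
    mul_inv_cancel, map_one, StarAlgEquiv.one_apply]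

lemma zTrace_of_commute (hA : A.PosDef) (hB : B.PosDef) (hz : z ≠ 0) (h : Commute A B) :
    zTrace z A B = reTrace n ℂ (A * B) := by
  have hAz := isStrictlyPositive_iff_posDef.2 (posDef_rpow hA z⁻¹)
  have hBz := isStrictlyPositive_iff_posDef.2 (posDef_rpow hB (2 * z)⁻¹)
  have hA' := isStrictlyPositive_iff_posDef.2 hA
  have hB' := isStrictlyPositive_iff_posDef.2 hB
  have hcomm : Commute (A ^ z⁻¹) (B ^ (2 * z)⁻¹) :=
    commute_rpow_left (commute_rpow_left h.symm _).symm _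
  rw [zTrace, mul_mul_rpow_of_commute hAz hBz hcomm, CFC.rpow_inv_rpow A z hz,
    CFC.rpow_inv_rpow B (2 * z) (mul_ne_zero two_ne_zero hz)]

lemma continuous_zTrace_unitary_conj (hA : A.PosDef) (hB : B.PosDef) (z : ℝ) :
    Continuous fun u : unitaryGroup n ℂ =>
      zTrace z ((u : Matrix n n ℂ) * A * star (u : Matrix n n ℂ)) B := by
  have hcont : Continuous fun u : unitaryGroup n ℂ =>
      B ^ (2 * z)⁻¹ * ((u : Matrix n n ℂ) * A ^ z⁻¹ * star (u : Matrix n n ℂ)) * B ^ (2 * z)⁻¹ := by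
    fun_prop
  simp only [zTrace, rpow_unitary_conj hA]
  refine (LinearMap.continuous_of_finiteDimensional (reTrace n ℂ)).comp ?_
  exact continuous_iff_continuousAt.2 fun u => continuousAt_rpow_of_posDef
    (fun v => posDef_mul_mul_self (posDef_unitary_conj (posDef_rpow hA _) v) (posDef_rpow hB _))
    hcont.continuousAt z

lemma commute_of_isLocalExtr_zTrace (hA : A.PosDef) (hB : B.PosDef) (hz : z ≠ 0)
    {u₀ : unitaryGroup n ℂ}
    (h : IsLocalExtr (fun u : unitaryGroup n ℂ =>
      zTrace z ((u : Matrix n n ℂ) * A * star (u : Matrix n n ℂ)) B) u₀) :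
    Commute ((u₀ : Matrix n n ℂ) * A * star (u₀ : Matrix n n ℂ)) B := by
  set A₀ := (u₀ : Matrix n n ℂ) * A * star (u₀ : Matrix n n ℂ) with hA₀
  have hA₀pos : A₀.PosDef := posDef_unitary_conj hA u₀
  have htranslate : IsLocalExtr (fun u : unitaryGroup n ℂ => reTrace n ℂ ((B ^ (2 * z)⁻¹ *
      ((u : Matrix n n ℂ) * A₀ ^ z⁻¹ * star (u : Matrix n n ℂ)) * B ^ (2 * z)⁻¹) ^ z)) 1 := by
    rw [← one_mul u₀] at h
    convert h.comp_continuous (g := fun u => u * u₀) (continuous_mul_const u₀).continuousAt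
      using 2 with u
    rw [← rpow_unitary_conj hA₀pos, Function.comp_apply, zTrace, hA₀, Submonoid.coe_mul, star_mul]
    simp only [mul_assoc]
  have hcomm := commute_of_isLocalExtr_reTrace_rpow (posDef_rpow hA₀pos _) (posDef_rpow hB _)
    hz htranslate
  have hcomm' := commute_of_commute_rpow_left (isStrictlyPositive_iff_posDef.2 hA₀pos)
    (inv_ne_zero hz) hcomm
  exact (commute_of_commute_rpow_left (isStrictlyPositive_iff_posDef.2 hB)
    (inv_ne_zero (mul_ne_zero two_ne_zero hz)) hcomm'.symm).symm

end ZTrace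

section UnitaryGroupTopology

instance infinite_circle : Infinite Circle :=
  have : Nontrivial Circle :=
    ⟨1, -1, fun h => self_ne_neg.2 one_ne_zero (congrArg ((↑) : Circle → ℂ) h)⟩
  PreconnectedSpace.infinite

lemma circle_smul_mem_unitary {R : Type*} [CStarAlgebra R] (c : Circle) (u : unitary R) :
    c • (u : R) ∈ unitary R := by
  have hc : (c : ℂ) ∈ unitary ℂ :=
    Unitary.mem_iff_self_mul_star.2 (by rw [Complex.star_def, Complex.mul_conj]; simp)
  exact (Unitary.smul_mem_of_mem hc u.2 : (c : ℂ) • (u : R) ∈ unitary R)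

/- Rotate `u` within the circle of its scalar multiples until `c` has moved to `-1`; the logarithm
then joins the rotated element to `1`. -/
lemma joined_one_of_notMem_spectrum {R : Type*} [CStarAlgebra R] {u : unitary R} {c : Circle}
    (h : (c : ℂ) ∉ spectrum ℂ (u : R)) : Joined 1 u := by
  let rotate (b : Circle) : unitary R := ⟨b • (u : R), circle_smul_mem_unitary b u⟩
  have hrotate : Continuous rotate := (continuous_id.smul continuous_const).subtype_mk _
  have hspectrum : -1 ∉ spectrum ℂ (rotate (-c⁻¹) : R) := by
    have hiff := spectrum.smul_mem_smul_iff (R := ℂ) (a := (u : R)) (s := c)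
      (r := Circle.toUnits (-c⁻¹))
    have hneg : Circle.toUnits (-c⁻¹) • (c : ℂ) = -1 := by
      simp [Units.smul_def]
    rw [hneg] at hiff
    exact mt hiff.1 h
  have hone : Joined 1 (rotate (-c⁻¹)) := by
    refine Unitary.joined _ _ ?_
    rwa [OneMemClass.coe_one, Unitary.norm_sub_one_lt_two_iff (SetLike.coe_mem _)]
  have hu : rotate 1 = u := Subtype.ext (one_smul Circle (u : R))
  exact hu ▸ hone.trans ((PathConnectedSpace.joined _ 1).map hrotate)

variable {n : Type*} [Fintype n] [DecidableEq n]

open scoped Matrix.Norms.L2Operator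

instance compactSpace_unitaryGroup : CompactSpace (unitaryGroup n ℂ) := by
  have : ProperSpace (Matrix n n ℂ) := FiniteDimensional.proper ℂ _
  refine isCompact_iff_compactSpace.1 (Metric.isCompact_of_isClosed_isBounded isClosed_unitary ?_)
  refine isBounded_iff_forall_norm_le.2 ⟨1, fun u hu => ?_⟩
  rcases subsingleton_or_nontrivial (Matrix n n ℂ) with _ | _
  · rw [Subsingleton.elim u 0, norm_zero]
    exact zero_le_one
  · exact (CStarRing.norm_of_mem_unitary hu).le

instance pathConnectedSpace_unitaryGroup : PathConnectedSpace (unitaryGroup n ℂ) := by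
  have hjoined (u : unitaryGroup n ℂ) : Joined 1 u := by
    have hfinite : {c : Circle | (c : ℂ) ∈ spectrum ℂ (u : Matrix n n ℂ)}.Finite :=
      (Matrix.finite_spectrum _).preimage Circle.coe_injective.injOn
    obtain ⟨c, hc⟩ := hfinite.exists_notMem
    exact joined_one_of_notMem_spectrum hc
  exact ⟨⟨1⟩, fun u v => (hjoined u).symm.trans (hjoined v)⟩

end UnitaryGroupTopology

section ZTraceRange

variable {n : Type*} [Fintype n] [DecidableEq n] {V W : unitaryGroup n ℂ} {a b : n → ℝ} {z : ℝ}

/-- The values of `zTrace z` along the unitary orbit of its first argument. -/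
def zTraceOrbit (z : ℝ) (A B : Matrix n n ℂ) : Set ℝ :=
  Set.range fun u : unitaryGroup n ℂ =>
    zTrace z ((u : Matrix n n ℂ) * A * star (u : Matrix n n ℂ)) B

lemma zTrace_spectralMatrix_self (ha : (spectralMatrix W a).PosDef)
    (hb : (spectralMatrix W b).PosDef) (hz : z ≠ 0) :
    zTrace z (spectralMatrix W a) (spectralMatrix W b) = a ⬝ᵥ b := by
  rw [zTrace_of_commute ha hb hz (commute_spectralMatrix W a b), reTrace_spectralMatrix_mul,
    Unitary.star_mul_self, OneMemClass.coe_one, sqNormMatrix_one, one_mulVec]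

lemma dotProduct_mem_zTraceOrbit (ha : (spectralMatrix V a).PosDef)
    (hb : (spectralMatrix W b).PosDef) (hz : z ≠ 0) :
    a ⬝ᵥ b ∈ zTraceOrbit z (spectralMatrix V a) (spectralMatrix W b) := by
  have halign := spectralMatrix_conj (W * V⁻¹) V a
  rw [inv_mul_cancel_right] at halign
  have hpos := posDef_unitary_conj ha (W * V⁻¹)
  rw [halign] at hpos
  exact ⟨W * V⁻¹, (congrArg (zTrace z · _) halign).trans (zTrace_spectralMatrix_self hpos hb hz)⟩

lemma exists_doublyStochastic_of_isLocalExtr (ha : (spectralMatrix V a).PosDef)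
    (hb : (spectralMatrix W b).PosDef) (hz : z ≠ 0) {u₀ : unitaryGroup n ℂ}
    (h : IsLocalExtr (fun u : unitaryGroup n ℂ =>
      zTrace z ((u : Matrix n n ℂ) * spectralMatrix V a * star (u : Matrix n n ℂ))
        (spectralMatrix W b)) u₀) :
    ∃ D ∈ doublyStochastic ℝ n,
      zTrace z ((u₀ : Matrix n n ℂ) * spectralMatrix V a * star (u₀ : Matrix n n ℂ))
        (spectralMatrix W b) = a ⬝ᵥ D *ᵥ b := by
  refine ⟨_, sqNormMatrix_mem_doublyStochastic (star (u₀ * V) * W), ?_⟩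
  rw [zTrace_of_commute (posDef_unitary_conj ha u₀) hb hz
    (commute_of_isLocalExtr_zTrace ha hb hz h), spectralMatrix_conj, reTrace_spectralMatrix_mul]

lemma isGreatest_zTraceOrbit (ha : (spectralMatrix V a).PosDef) (hb : (spectralMatrix W b).PosDef)
    (hz : z ≠ 0) (hab : Monovary a b) :
    IsGreatest (zTraceOrbit z (spectralMatrix V a) (spectralMatrix W b)) (a ⬝ᵥ b) := by
  refine ⟨dotProduct_mem_zTraceOrbit ha hb hz, ?_⟩
  obtain ⟨u₀, -, hmax⟩ := isCompact_univ.exists_isMaxOn Set.univ_nonempty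
    (continuous_zTrace_unitary_conj ha hb z).continuousOn
  obtain ⟨D, hD, hu₀⟩ := exists_doublyStochastic_of_isLocalExtr ha hb hz
    (hmax.isLocalMax Filter.univ_mem).isExtr
  rintro _ ⟨u, rfl⟩
  exact (hmax (Set.mem_univ u)).trans (hu₀.trans_le (dotProduct_mulVec_le_of_monovary hD hab))

lemma isLeast_zTraceOrbit (ha : (spectralMatrix V a).PosDef) (hb : (spectralMatrix W b).PosDef)
    (hz : z ≠ 0) (hab : Antivary a b) :
    IsLeast (zTraceOrbit z (spectralMatrix V a) (spectralMatrix W b)) (a ⬝ᵥ b) := by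
  refine ⟨dotProduct_mem_zTraceOrbit ha hb hz, ?_⟩
  obtain ⟨u₀, -, hmin⟩ := isCompact_univ.exists_isMinOn Set.univ_nonempty
    (continuous_zTrace_unitary_conj ha hb z).continuousOn
  obtain ⟨D, hD, hu₀⟩ := exists_doublyStochastic_of_isLocalExtr ha hb hz
    (hmin.isLocalMin Filter.univ_mem).isExtr
  rintro _ ⟨u, rfl⟩
  exact ((le_dotProduct_mulVec_of_antivary hD hab).trans_eq hu₀.symm).trans (hmin (Set.mem_univ u))

theorem zTraceOrbit_eq_Icc {T : unitaryGroup n ℂ} {c : n → ℝ} {B : Matrix n n ℂ}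
    (ha : (spectralMatrix V a).PosDef) (hB : B.PosDef) (hb : spectralMatrix W b = B)
    (hc : spectralMatrix T c = B) (hz : z ≠ 0) (hab : Antivary a b) (hac : Monovary a c) :
    zTraceOrbit z (spectralMatrix V a) B = Set.Icc (a ⬝ᵥ b) (a ⬝ᵥ c) := by
  have hleast := isLeast_zTraceOrbit ha (hb ▸ hB) hz hab
  have hgreatest := isGreatest_zTraceOrbit ha (hc ▸ hB) hz hac
  rw [hb] at hleast
  rw [hc] at hgreatest
  have hconn := isPreconnected_range (continuous_zTrace_unitary_conj ha hB z)
  exact Set.Subset.antisymm (fun x hx => ⟨hleast.2 hx, hgreatest.2 hx⟩)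
    (hconn.Icc_subset hleast.1 hgreatest.1)

theorem zTraceOrbit_eq_uIcc {d : ℕ} {V W : unitaryGroup (Fin d) ℂ} {a b : Fin d → ℝ}
    (ha : (spectralMatrix V a).PosDef) (hb : (spectralMatrix W b).PosDef) (hz : z ≠ 0)
    (ha' : Monotone a ∨ Antitone a) (hb' : Monotone b ∨ Antitone b) :
    zTraceOrbit z (spectralMatrix V a) (spectralMatrix W b) =
      Set.uIcc (a ⬝ᵥ b) (a ⬝ᵥ (b ∘ Fin.rev)) := by
  obtain ⟨T, hT⟩ : ∃ T, spectralMatrix T (b ∘ Fin.rev) = spectralMatrix W b :=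
    exists_spectralMatrix_comp_perm W b Fin.revPerm
  have hvary : Antivary a b ∧ Monovary a (b ∘ Fin.rev) ∨
      Antivary a (b ∘ Fin.rev) ∧ Monovary a b := by
    rcases ha' with ha' | ha' <;> rcases hb' with hb' | hb'
    · exact .inr ⟨ha'.antivary (hb'.comp_antitone Fin.rev_anti), ha'.monovary hb'⟩
    · exact .inl ⟨ha'.antivary hb', ha'.monovary (hb'.comp Fin.rev_anti)⟩
    · exact .inl ⟨ha'.antivary hb', ha'.monovary (hb'.comp_antitone Fin.rev_anti)⟩
    · exact .inr ⟨ha'.antivary (hb'.comp Fin.rev_anti), ha'.monovary hb'⟩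
  rcases hvary with ⟨hanti, hmono⟩ | ⟨hanti, hmono⟩
  · have hIcc := zTraceOrbit_eq_Icc ha hb rfl hT hz hanti hmono
    rw [hIcc, Set.uIcc_of_le (Set.nonempty_Icc.1 (hIcc ▸ Set.range_nonempty _))]
  · have hIcc := zTraceOrbit_eq_Icc ha hb hT rfl hz hanti hmono
    rw [hIcc, Set.uIcc_of_ge (Set.nonempty_Icc.1 (hIcc ▸ Set.range_nonempty _))]

end ZTraceRange

section SortedVectors

variable {d : ℕ}

lemma sortUp_monotone (p : Fin d → ℝ) : Monotone (sortUp p) :=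
  Tuple.monotone_sort p

lemma sortDown_antitone (p : Fin d → ℝ) : Antitone (sortDown p) :=
  (sortUp_monotone p).comp_antitone Fin.rev_anti

lemma FazC_sortDown_sortUp_le {p q : Fin d → ℝ} (hp : ∀ i, 0 ≤ p i) (hq : ∀ i, 0 ≤ q i) {α : ℝ}
    (hα₀ : 0 ≤ α) (hα₁ : α ≤ 1) :
    FazC (sortDown p) (sortUp q) α ≤ FazC (sortDown p) (sortDown q) α := by
  have hanti : Antivary (fun i => sortDown p i ^ α) fun i => sortUp q i ^ (1 - α) :=
    Antitone.antivary
      (fun _ _ hij => Real.rpow_le_rpow (hp _) (sortDown_antitone p hij) hα₀)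
      fun _ _ hij => Real.rpow_le_rpow (hq _) (sortUp_monotone q hij) (sub_nonneg.2 hα₁)
  have hsum := hanti.sum_mul_le_sum_mul_comp_perm (σ := Fin.revPerm)
  exact Real.rpow_le_rpow (Finset.sum_nonneg fun i _ =>
    mul_nonneg (Real.rpow_nonneg (hp _) _) (Real.rpow_nonneg (hq _) _)) hsum
    (one_div_nonneg.2 hα₀)

end SortedVectors

section Fidelity

open scoped Matrix.Norms.L2Operator MatrixOrder

variable {d : ℕ} {ρ σ : Matrix (Fin d) (Fin d) ℂ}

lemma eigUp_pos (hρ : ρ.PosDef) (i : Fin d) : 0 < eigUp hρ.1 i :=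
  hρ.eigenvalues_pos _

lemma eigDown_pos (hρ : ρ.PosDef) (i : Fin d) : 0 < eigDown hρ.1 i :=
  hρ.eigenvalues_pos _

lemma mpow_eq_rpow (hρ : ρ.PosDef) (t : ℝ) : mpow ρ t = ρ ^ t := by
  rw [rpow_eq_cfc hρ, hρ.1.cfc_eq, mpow, dif_pos hρ.1]
  rfl

lemma Faz_eq_zTrace (hρ : ρ.PosDef) (hσ : σ.PosDef) (α z : ℝ) :
    Faz ρ σ α z = zTrace z (ρ ^ α) (σ ^ (1 - α)) ^ (1 / α) := by
  have hρ' := isStrictlyPositive_iff_posDef.2 hρ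
  have hσ' := isStrictlyPositive_iff_posDef.2 hσ
  have hpos := posDef_mul_mul_self (posDef_rpow hρ (α / z)) (posDef_rpow hσ ((1 - α) / (2 * z)))
  rw [Faz, mpow_eq_rpow hρ, mpow_eq_rpow hσ, mpow_eq_rpow hpos, zTrace,
    rpow_rpow_of_isStrictlyPositive hρ', rpow_rpow_of_isStrictlyPositive hσ', div_eq_mul_inv α,
    div_eq_mul_inv (1 - α)]
  rfl

lemma exists_spectralMatrix_eigUp (hρ : ρ.PosDef) (t : ℝ) :
    ∃ V, spectralMatrix V (fun i => eigUp hρ.1 i ^ t) = ρ ^ t := by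
  rw [rpow_eq_cfc hρ, cfc_eq_spectralMatrix hρ.1]
  exact exists_spectralMatrix_comp_perm hρ.1.eigenvectorUnitary
    ((fun x : ℝ => x ^ t) ∘ hρ.1.eigenvalues) (Tuple.sort hρ.1.eigenvalues)

lemma exists_spectralMatrix_eigDown (hρ : ρ.PosDef) (t : ℝ) :
    ∃ V, spectralMatrix V (fun i => eigDown hρ.1 i ^ t) = ρ ^ t := by
  obtain ⟨V, hV⟩ := exists_spectralMatrix_eigUp hρ t
  rw [← hV]
  exact exists_spectralMatrix_comp_perm V (fun i => eigUp hρ.1 i ^ t) Fin.revPerm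

lemma zTraceOrbit_rpow_eq_uIcc (hρ : ρ.PosDef) (hσ : σ.PosDef) {z : ℝ} (hz : z ≠ 0) (s t : ℝ) :
    zTraceOrbit z (ρ ^ s) (σ ^ t) =
      Set.uIcc (∑ i, eigDown hρ.1 i ^ s * eigUp hσ.1 i ^ t)
        (∑ i, eigDown hρ.1 i ^ s * eigDown hσ.1 i ^ t) := by
  obtain ⟨V, hV⟩ := exists_spectralMatrix_eigDown hρ s
  obtain ⟨W, hW⟩ := exists_spectralMatrix_eigUp hσ t
  rw [← hV, ← hW]
  exact zTraceOrbit_eq_uIcc (hV ▸ posDef_rpow hρ s) (hW ▸ posDef_rpow hσ t) hz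
    (monotone_or_antitone_rpow (eigDown_pos hρ)
      (.inr (sortDown_antitone hρ.1.eigenvalues)) s)
    (monotone_or_antitone_rpow (eigUp_pos hσ)
      (.inl (sortUp_monotone hσ.1.eigenvalues)) t)

lemma setOf_Faz_eq_image (hρ : ρ.PosDef) (hσ : σ.PosDef) (α z : ℝ) :
    {x : ℝ | ∃ U ∈ unitaryGroup (Fin d) ℂ, x = Faz ρ (U * σ * star U) α z} =
      (fun x : ℝ => x ^ (1 / α)) '' zTraceOrbit z (ρ ^ α) (σ ^ (1 - α)) := by
  have hFaz (u : unitaryGroup (Fin d) ℂ) :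
      Faz ρ ((u : Matrix (Fin d) (Fin d) ℂ) * σ * star (u : Matrix (Fin d) (Fin d) ℂ)) α z =
        zTrace z (((u⁻¹ : unitaryGroup (Fin d) ℂ) : Matrix (Fin d) (Fin d) ℂ) * ρ ^ α *
          star ((u⁻¹ : unitaryGroup (Fin d) ℂ) : Matrix (Fin d) (Fin d) ℂ)) (σ ^ (1 - α)) ^
            (1 / α) := by
    rw [Faz_eq_zTrace hρ (posDef_unitary_conj hσ u), rpow_unitary_conj hσ,
      zTrace_unitary_conj_right (posDef_rpow hρ α) (posDef_rpow hσ (1 - α))]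
  ext x
  constructor
  · rintro ⟨U, hU, rfl⟩
    exact ⟨_, ⟨_, rfl⟩, (hFaz ⟨U, hU⟩).symm⟩
  · rintro ⟨_, ⟨u, rfl⟩, rfl⟩
    exact ⟨_, (u⁻¹).2, by rw [hFaz, inv_inv]⟩

theorem stmt_6_general (hρ : ρ.PosDef) (hσ : σ.PosDef) {α z : ℝ} (_hα : α ≠ 0) (hz : z ≠ 0) :
    {x : ℝ | ∃ U ∈ unitaryGroup (Fin d) ℂ, x = Faz ρ (U * σ * star U) α z} =
      Set.uIcc (FazC (eigDown hρ.1) (eigUp hσ.1) α) (FazC (eigDown hρ.1) (eigDown hσ.1) α) := by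
  rw [setOf_Faz_eq_image hρ hσ, zTraceOrbit_rpow_eq_uIcc hρ hσ hz]
  rcases isEmpty_or_nonempty (Fin d) with _ | _
  · simp only [FazC, Finset.univ_eq_empty, Finset.sum_empty, Set.uIcc_self, Set.image_singleton]
  · exact image_rpow_uIcc (sum_rpow_mul_rpow_pos (eigDown_pos hρ) (eigUp_pos hσ) _ _)
      (sum_rpow_mul_rpow_pos (eigDown_pos hρ) (eigDown_pos hσ) _ _) _

end Fidelity

/-- for positive definite density matrices `ρ, σ` and `α, z ∈ (0,1)`,
the set of values `F_{α,z}(ρ, UσU*)` over unitaries `U` is exactly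
`[F_α^C(λ↓(ρ),λ↑(σ)), F_α^C(λ↓(ρ),λ↓(σ))]`. -/
theorem stmt_6 {d : ℕ} (ρ σ : Matrix (Fin d) (Fin d) ℂ)
    (hρ : ρ.PosDef) (hσ : σ.PosDef) (hρ1 : ρ.trace = 1) (hσ1 : σ.trace = 1)
    (α z : ℝ) (hα : α ∈ Set.Ioo (0 : ℝ) 1) (hz : z ∈ Set.Ioo (0 : ℝ) 1) :
    {x : ℝ | ∃ U ∈ Matrix.unitaryGroup (Fin d) ℂ, x = Faz ρ (U * σ * star U) α z}
      = Set.Icc (FazC (eigDown hρ.1) (eigUp hσ.1) α)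
          (FazC (eigDown hρ.1) (eigDown hσ.1) α) := by
  rw [stmt_6_general hρ hσ hα.1.ne' hz.1.ne']
  exact Set.uIcc_of_le (FazC_sortDown_sortUp_le (fun i => (hρ.eigenvalues_pos i).le)
    (fun i => (hσ.eigenvalues_pos i).le) hα.1.le hα.2.le)
end

section
/- Let ρ and σ be positive definite d×d density matrices, and let (α,z) satisfy either α, z ∈ (0,1), or α ∈ (1,∞) and z ∈ (0,∞). Then the maximum of the sandwiched α-z-Rényi relative entropy S_{α,z}(ρ‖UσU*) over all d×d unitary matrices U equals S_α^C(λ↓(ρ)‖λ↑(σ)). -/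
open Matrix
open scoped ComplexOrder

/-- The sandwiched α-z-Rényi relative entropy `S_{α,z}(ρ‖σ) = (α/(α−1)) log F_{α,z}(ρ,σ)`. -/
noncomputable def Saz {d : ℕ} (ρ σ : Matrix (Fin d) (Fin d) ℂ) (α z : ℝ) : ℝ :=
  (α / (α - 1)) * Real.log (Faz ρ σ α z)

/-- The classical α-Rényi relative entropy `S_α^C(p‖q) = (α/(α−1)) log F_α^C(p,q)`. -/
noncomputable def SazC {d : ℕ} (p q : Fin d → ℝ) (α : ℝ) : ℝ :=
  (α / (α - 1)) * Real.log (FazC p q α)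

/-!
By unitary invariance of the trace and the spectral theorem, the claim concerns the extrema over the
compact unitary group of `W ↦ tr (S B S) ^ z`, where `B = W A W*`, `S = σ ^ ((1 - α) / (2z))` and
`A = ρ ^ (α / z)`: the maximum if `α > 1` and the minimum if `α < 1`.

At an extremum, varying `W` along `exp (t X) W` shows that `B` commutes with `S f'(C) S`, where
`C = S B S` and `f x = x ^ z`. Multiplying this commutation by `S` on both sides,
`f'(C) C = z C ^ z` commutes with `S ^ 2`; since `z ≠ 0` and `C` is positive definite, `C` commutes
with `S`, and so does `B`. The extremal value is then `∑ w i j * (p i ^ α * q j ^ (1 - α))` with `w`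
doubly stochastic, which is estimated by Birkhoff's theorem and the rearrangement inequality.

The differentiability of `D ↦ tr f(D)` at a Hermitian matrix `C` needs only the differentiability of
`f` on the spectrum of `C`. In terms of eigenvalues, the remainder is a sum of
`f (b j) - f (a i) - f' (a i) * (b j - a i)` weighted by the squared overlaps `w i j` of the
eigenvectors, and `∑ w i j * (b j - a i) ^ 2` is the squared Frobenius distance of the matrices.
-/

open Filter
open Polynomial (aeval)
open Unitary (conjStarAlgAut conjStarAlgAut_apply conjStarAlgAut_mul_apply)
open scoped Polynomial Topology

section FunctionalCalculus

variable {n 𝕜 : Type*} [Fintype n] [DecidableEq n] [RCLike 𝕜] {A : Matrix n n 𝕜}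

/-- The Hermitian matrix `V diag(a) V*`, whose eigenvalues are the entries of `a` and whose
eigenvectors are the columns of the unitary matrix `V`, as an algebra homomorphism in `a`. -/
noncomputable def conjDiagonal (V : unitaryGroup n 𝕜) : (n → ℝ) →ₐ[ℝ] Matrix n n 𝕜 :=
  ((conjStarAlgAut 𝕜 _ V).toAlgEquiv.toAlgHom.restrictScalars ℝ).comp <|
    (diagonalAlgHom ℝ).comp (RCLike.ofRealAm.compLeft n)

lemma conjDiagonal_apply (V : unitaryGroup n 𝕜) (a : n → ℝ) :
    conjDiagonal V a =
      (V : Matrix n n 𝕜) * diagonal (fun i => (a i : 𝕜)) * star (V : Matrix n n 𝕜) :=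
  rfl

lemma conjStarAlgAut_conjDiagonal (W V : unitaryGroup n 𝕜) (a : n → ℝ) :
    conjStarAlgAut 𝕜 _ W (conjDiagonal V a) = conjDiagonal (W * V) a :=
  (conjStarAlgAut_mul_apply W V _).symm

lemma isHermitian_conjDiagonal (V : unitaryGroup n 𝕜) (a : n → ℝ) :
    (conjDiagonal V a).IsHermitian :=
  isHermitian_mul_mul_conjTranspose _ (isHermitian_diagonal_of_self_adjoint _ (by ext i; simp))

lemma posDef_conjDiagonal (V : unitaryGroup n 𝕜) {a : n → ℝ} (ha : ∀ i, 0 < a i) :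
    (conjDiagonal V a).PosDef := by
  have hdiag : (diagonal fun i => (a i : 𝕜)).PosDef := .diagonal fun i => by simpa using ha i
  exact hdiag.mul_mul_conjTranspose_same (B := (V : Matrix n n 𝕜))
    (vecMul_injective_of_isUnit (Unitary.toUnits V).isUnit)

lemma mem_spectrum_conjDiagonal (V : unitaryGroup n 𝕜) (a : n → ℝ) (i : n) :
    a i ∈ spectrum ℝ (conjDiagonal V a) := by
  apply spectrum.of_algebraMap_mem 𝕜
  rw [conjDiagonal_apply, Unitary.spectrum_star_right_conjugate,
    spectrum_diagonal]
  exact ⟨i, rfl⟩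

lemma exists_eq_conjDiagonal (hA : A.IsHermitian) (e : Equiv.Perm n) :
    ∃ V : unitaryGroup n 𝕜, A = conjDiagonal V (hA.eigenvalues ∘ e) := by
  set U : Matrix n n 𝕜 := (hA.eigenvectorUnitary : Matrix n n 𝕜)
  have hU : star U * U = 1 := Unitary.coe_star_mul_self hA.eigenvectorUnitary
  have hV : U.submatrix id e ∈ unitaryGroup n 𝕜 := by
    rw [mem_unitaryGroup_iff', star_eq_conjTranspose, conjTranspose_submatrix,
      ← submatrix_mul _ _ e id e Function.bijective_id, ← star_eq_conjTranspose, hU,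
      submatrix_one_equiv]
  refine ⟨⟨_, hV⟩, ?_⟩
  conv_lhs => rw [hA.spectral_theorem, conjStarAlgAut_apply]
  rw [conjDiagonal_apply]
  ext i j
  simp only [mul_apply (N := star _), mul_diagonal, submatrix_apply, star_apply,
    Function.comp_apply, id]
  exact (Equiv.sum_comp e fun k => U i k * (hA.eigenvalues k : 𝕜) * star (U j k)).symm

lemma exists_polynomial_cfc_eq_aeval (hA : A.IsHermitian) (f : ℝ → ℝ) {s : Set ℝ}
    (hs : s.Finite) : ∃ p : ℝ[X], (∀ x ∈ s, p.eval x = f x) ∧ cfc f A = aeval A p := by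
  have ht : (s ∪ spectrum ℝ A).Finite := hs.union A.finite_real_spectrum
  set p := Lagrange.interpolate ht.toFinset id f
  have hp : ∀ x ∈ s ∪ spectrum ℝ A, p.eval x = f x := fun x hx =>
    Lagrange.eval_interpolate_at_node f Function.injective_id.injOn (ht.mem_toFinset.2 hx)
  refine ⟨p, fun x hx => hp x (.inl hx), ?_⟩
  rw [← cfc_polynomial p A hA.isSelfAdjoint]
  exact cfc_congr fun x hx => (hp x (.inr hx)).symm

lemma cfc_conjDiagonal (f : ℝ → ℝ) (V : unitaryGroup n 𝕜) (a : n → ℝ) :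
    cfc f (conjDiagonal V a) = conjDiagonal V (f ∘ a) := by
  obtain ⟨p, hp, hcfc⟩ := exists_polynomial_cfc_eq_aeval (isHermitian_conjDiagonal V a) f
    (Set.finite_range a)
  have hpa : aeval a p = f ∘ a := by
    ext i
    rw [Polynomial.aeval_pi_apply₂, Polynomial.coe_aeval_eq_eval, hp _ (Set.mem_range_self i),
      Function.comp]
  rw [hcfc, Polynomial.aeval_algHom_apply, hpa]

/-- The unistochastic matrix of a unitary matrix `Q`, whose entries are the squared moduli of those
of `Q`. For `Q = U* V` these are the squared overlaps of the eigenbases `U` and `V`. -/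
noncomputable def unistochastic (Q : unitaryGroup n 𝕜) : Matrix n n ℝ :=
  fun i j => ‖(Q : Matrix n n 𝕜) i j‖ ^ 2

lemma unistochastic_mem_doublyStochastic (Q : unitaryGroup n 𝕜) :
    unistochastic Q ∈ doublyStochastic ℝ n := by
  rw [mem_doublyStochastic_iff_sum]
  refine ⟨fun i j => sq_nonneg _, fun i => ?_, fun j => ?_⟩
  · have h := congr_fun₂ (Unitary.coe_mul_star_self Q) i i
    simp only [Unitary.coe_star, mul_apply, star_apply, one_apply_eq, RCLike.star_def,
      RCLike.mul_conj] at h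
    exact_mod_cast h
  · have h := congr_fun₂ (Unitary.coe_star_mul_self Q) j j
    simp only [mul_apply, star_apply, one_apply_eq, RCLike.star_def, RCLike.conj_mul] at h
    exact_mod_cast h

lemma trace_conjDiagonal_mul_conjDiagonal (U V : unitaryGroup n 𝕜) (a b : n → ℝ) :
    (conjDiagonal U a * conjDiagonal V b).trace =
      ((∑ i, ∑ j, unistochastic (star U * V) i j * (a i * b j) : ℝ) : 𝕜) := by
  set Q : Matrix n n 𝕜 := star (U : Matrix n n 𝕜) * V
  have hcycle : (conjDiagonal U a * conjDiagonal V b).trace =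
      (diagonal (fun i => (a i : 𝕜)) * Q * diagonal (fun j => (b j : 𝕜)) * star Q).trace := by
    simp only [conjDiagonal_apply, Q, star_mul, star_star, mul_assoc]
    rw [trace_mul_comm]
    simp only [mul_assoc]
  rw [hcycle]
  simp only [trace, diag_apply, mul_apply (N := star Q), mul_diagonal, diagonal_mul, star_apply,
    RCLike.star_def, unistochastic]
  push_cast
  refine Finset.sum_congr rfl fun i _ => Finset.sum_congr rfl fun j _ => ?_
  rw [← RCLike.mul_conj]
  ring

lemma trace_conjDiagonal (V : unitaryGroup n 𝕜) (a : n → ℝ) :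
    (conjDiagonal V a).trace = ((∑ i, a i : ℝ) : 𝕜) := by
  rw [conjDiagonal_apply, trace_mul_comm, ← mul_assoc, Unitary.coe_star_mul_self, one_mul,
    trace_diagonal, RCLike.ofReal_sum]

-- Commuting matrices have a joint functional calculus; by interpolation, polynomials suffice.
lemma trace_cfc_mul_of_commute (f : ℝ → ℝ) {U V : unitaryGroup n 𝕜} {a b : n → ℝ}
    (h : Commute (conjDiagonal U a) (conjDiagonal V b)) :
    (cfc f (conjDiagonal U a * conjDiagonal V b)).trace =
      ((∑ i, ∑ j, unistochastic (star U * V) i j * f (a i * b j) : ℝ) : 𝕜) := by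
  have hAB : (conjDiagonal U a * conjDiagonal V b).IsHermitian :=
    ((isHermitian_conjDiagonal U a).commute_iff (isHermitian_conjDiagonal V b)).1 h
  obtain ⟨p, hp, hcfc⟩ := exists_polynomial_cfc_eq_aeval hAB f
    (Set.finite_range fun ij : n × n => a ij.1 * b ij.2)
  have hpow (k : ℕ) : ((conjDiagonal U a * conjDiagonal V b) ^ k).trace =
      ((∑ i, ∑ j, unistochastic (star U * V) i j * (a i * b j) ^ k : ℝ) : 𝕜) := by
    simp only [h.mul_pow, ← map_pow, trace_conjDiagonal_mul_conjDiagonal, Pi.pow_apply, mul_pow]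
  simp only [hcfc, ← hp _ (Set.mem_range_self (_, _)), Polynomial.aeval_eq_sum_range,
    Polynomial.eval_eq_sum_range, trace_sum, trace_smul, hpow, Finset.mul_sum]
  simp only [RCLike.real_smul_eq_coe_mul, ← RCLike.ofReal_mul, ← RCLike.ofReal_sum, Finset.mul_sum]
  rw [Finset.sum_comm]
  refine congrArg _ (Finset.sum_congr rfl fun i _ => ?_)
  rw [Finset.sum_comm]
  refine Finset.sum_congr rfl fun j _ => Finset.sum_congr rfl fun k _ => ?_
  ring

lemma trace_cfc_conjStarAlgAut (f : ℝ → ℝ) {H : Matrix n n 𝕜} (hH : H.IsHermitian)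
    (W : unitaryGroup n 𝕜) : (cfc f (conjStarAlgAut 𝕜 _ W H)).trace = (cfc f H).trace := by
  obtain ⟨V, hV⟩ := exists_eq_conjDiagonal hH 1
  rw [hV, conjStarAlgAut_conjDiagonal]
  simp only [cfc_conjDiagonal, trace_conjDiagonal]

end FunctionalCalculus

section TraceDerivative

lemma exists_eventually_abs_sub_deriv_mul_le {f : ℝ → ℝ} {s : Set ℝ} (hs : s.Finite)
    (hf : ∀ x ∈ s, DifferentiableAt ℝ f x) {ε : ℝ} (hε : 0 < ε) :
    ∃ K, ∀ᶠ y in 𝓝ˢ s, ∀ x ∈ s,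
      |f y - f x - deriv f x * (y - x)| ≤ ε * |y - x| + K * (y - x) ^ 2 := by
  have hlocal : ∀ x ∈ s, ∀ κ ∈ s, ∀ᶠ K in atTop, ∀ᶠ y in 𝓝 κ,
      |f y - f x - deriv f x * (y - x)| ≤ ε * |y - x| + K * (y - x) ^ 2 := by
    intro x hx κ hκ
    by_cases hκx : κ = x
    · subst hκx
      filter_upwards [eventually_ge_atTop 0] with K hK
      filter_upwards [(hf κ hx).hasDerivAt.isLittleO.def hε] with y hy
      have hKy : 0 ≤ K * (y - κ) ^ 2 := by positivity
      simp only [Real.norm_eq_abs, smul_eq_mul, mul_comm (y - κ)] at hy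
      linarith
    · have hpos : 0 < (κ - x) ^ 2 := by have := sub_ne_zero.2 hκx; positivity
      filter_upwards [eventually_gt_atTop (|f κ - f x - deriv f x * (κ - x)| / (κ - x) ^ 2)]
        with K hK
      have hlt : |f κ - f x - deriv f x * (κ - x)| < ε * |κ - x| + K * (κ - x) ^ 2 :=
        ((div_lt_iff₀ hpos).1 hK).trans_le (le_add_of_nonneg_left (by positivity))
      have hcont : ContinuousAt f κ := (hf κ hκ).continuousAt
      exact ((ContinuousAt.eventually_lt (by fun_prop) (by fun_prop) hlt).mono fun _ => le_of_lt)
  obtain ⟨K, hK⟩ := ((hs.eventually_all).2 fun x hx => (hs.eventually_all).2 (hlocal x hx)).exists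
  refine ⟨K, eventually_nhdsSet_iff_forall.2 fun κ hκ => ?_⟩
  exact (hs.eventually_all).2 fun x hx => hK x hx κ hκ

variable {n 𝕜 : Type*} [Fintype n] [DecidableEq n] [RCLike 𝕜]

lemma re_trace_conjDiagonal_sub_sub (f g : ℝ → ℝ) (U V : unitaryGroup n 𝕜) (a b : n → ℝ) :
    RCLike.re (cfc f (conjDiagonal V b)).trace - RCLike.re (cfc f (conjDiagonal U a)).trace -
        RCLike.re (cfc g (conjDiagonal U a) * (conjDiagonal V b - conjDiagonal U a)).trace =
      ∑ i, ∑ j, unistochastic (star U * V) i j * (f (b j) - f (a i) - g (a i) * (b j - a i)) := by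
  have hU (c : n → ℝ) : (conjDiagonal U c).trace = (conjDiagonal U c * conjDiagonal V 1).trace := by
    rw [map_one, mul_one]
  have hV : (conjDiagonal V (f ∘ b)).trace =
      (conjDiagonal U 1 * conjDiagonal V (f ∘ b)).trace := by rw [map_one, one_mul]
  rw [cfc_conjDiagonal, cfc_conjDiagonal, cfc_conjDiagonal, mul_sub, trace_sub, ← map_mul, hV,
    hU, hU]
  simp only [trace_conjDiagonal_mul_conjDiagonal, map_sub, RCLike.ofReal_re,
    ← Finset.sum_sub_distrib]
  refine Finset.sum_congr rfl fun i _ => Finset.sum_congr rfl fun j _ => ?_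
  simp only [Function.comp_apply, Pi.mul_apply, Pi.one_apply]
  ring

open scoped Matrix.Norms.Frobenius

lemma frobenius_norm_sq_eq_re_trace (A : Matrix n n 𝕜) : ‖A‖ ^ 2 = RCLike.re (Aᴴ * A).trace := by
  rw [← frobenius_norm_transpose, frobenius_norm_def, ← Real.sqrt_eq_rpow,
    Real.sq_sqrt (by positivity)]
  simp only [trace, diag_apply, mul_apply, conjTranspose_apply, transpose_apply, RCLike.star_def,
    RCLike.conj_mul, map_sum, ← RCLike.ofReal_pow, RCLike.ofReal_re, Real.rpow_two]

lemma sum_unistochastic_mul_sq_sub (U V : unitaryGroup n 𝕜) (a b : n → ℝ) :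
    ∑ i, ∑ j, unistochastic (star U * V) i j * (b j - a i) ^ 2 =
      ‖conjDiagonal V b - conjDiagonal U a‖ ^ 2 := by
  have hexpand := re_trace_conjDiagonal_sub_sub (fun x => x ^ 2) (fun x => 2 * x) U V a b
  have hsq (i j : n) : b j ^ 2 - a i ^ 2 - 2 * a i * (b j - a i) = (b j - a i) ^ 2 := by ring
  have hU := (isHermitian_conjDiagonal U a).isSelfAdjoint
  have hV := (isHermitian_conjDiagonal V b).isSelfAdjoint
  simp only [hsq] at hexpand
  rw [← hexpand, frobenius_norm_sq_eq_re_trace,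
    ((isHermitian_conjDiagonal V b).sub (isHermitian_conjDiagonal U a)).eq, cfc_pow_id _ 2 hV,
    cfc_pow_id _ 2 hU, cfc_const_mul_id 2 _ hU]
  simp only [pow_two, mul_sub, sub_mul, smul_mul_assoc, trace_sub, trace_smul, map_sub,
    RCLike.smul_re]
  rw [trace_mul_comm (conjDiagonal V b) (conjDiagonal U a)]
  ring

lemma sum_unistochastic_mul_abs_sub_le (U V : unitaryGroup n 𝕜) (a b : n → ℝ) :
    ∑ i, ∑ j, unistochastic (star U * V) i j * |b j - a i| ≤
      √(Fintype.card n) * ‖conjDiagonal V b - conjDiagonal U a‖ := by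
  obtain ⟨hw, hrow, -⟩ := mem_doublyStochastic_iff_sum.1
    (unistochastic_mem_doublyStochastic (star U * V))
  have hcauchy := Finset.sum_sq_le_sum_mul_sum_of_sq_le_mul (Finset.univ : Finset (n × n))
    (r := fun ij => unistochastic (star U * V) ij.1 ij.2 * |b ij.2 - a ij.1|)
    (f := fun ij => unistochastic (star U * V) ij.1 ij.2)
    (g := fun ij => unistochastic (star U * V) ij.1 ij.2 * (b ij.2 - a ij.1) ^ 2)
    (fun _ _ => hw _ _) (fun _ _ => mul_nonneg (hw _ _) (sq_nonneg _))
    (fun _ _ => by rw [mul_pow, sq_abs, pow_two, mul_assoc])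
  simp only [Fintype.sum_prod_type, sum_unistochastic_mul_sq_sub, hrow, Finset.sum_const,
    Finset.card_univ, nsmul_one] at hcauchy
  refine le_of_sq_le_sq ?_ (by positivity)
  rwa [mul_pow, Real.sq_sqrt (Nat.cast_nonneg _)]

/-- The real-linear functional `X ↦ re tr (M X)`. -/
noncomputable def reTraceMul (M : Matrix n n 𝕜) : Matrix n n 𝕜 →L[ℝ] ℝ :=
  LinearMap.toContinuousLinearMap <|
    RCLike.reLm ∘ₗ (traceLinearMap n ℝ 𝕜) ∘ₗ LinearMap.mulLeft ℝ M

lemma reTraceMul_apply (M X : Matrix n n 𝕜) : reTraceMul M X = RCLike.re (M * X).trace := rfl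

lemma abs_re_trace_cfc_sub_sub_le {f g : ℝ → ℝ} {C D : Matrix n n 𝕜} (hC : C.IsHermitian)
    (hD : D.IsHermitian) {ε K : ℝ} (hε : 0 ≤ ε)
    (h : ∀ y ∈ spectrum ℝ D, ∀ x ∈ spectrum ℝ C,
      |f y - f x - g x * (y - x)| ≤ ε * |y - x| + K * (y - x) ^ 2) :
    |RCLike.re (cfc f D).trace - RCLike.re (cfc f C).trace - reTraceMul (cfc g C) (D - C)| ≤
      ε * (√(Fintype.card n) * ‖D - C‖) + K * ‖D - C‖ ^ 2 := by
  obtain ⟨U, a, rfl⟩ : ∃ U a, C = conjDiagonal U a :=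
    ⟨_, _, (exists_eq_conjDiagonal hC 1).choose_spec⟩
  obtain ⟨V, b, rfl⟩ : ∃ V b, D = conjDiagonal V b :=
    ⟨_, _, (exists_eq_conjDiagonal hD 1).choose_spec⟩
  set w := unistochastic (star U * V)
  have hw (i j : n) : 0 ≤ w i j := sq_nonneg _
  rw [reTraceMul_apply, re_trace_conjDiagonal_sub_sub]
  calc |∑ i, ∑ j, w i j * (f (b j) - f (a i) - g (a i) * (b j - a i))|
      ≤ ∑ i, ∑ j, |w i j * (f (b j) - f (a i) - g (a i) * (b j - a i))| :=
        (Finset.abs_sum_le_sum_abs _ _).trans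
          (Finset.sum_le_sum fun i _ => Finset.abs_sum_le_sum_abs _ _)
    _ ≤ ∑ i, ∑ j, w i j * (ε * |b j - a i| + K * (b j - a i) ^ 2) := by
        simp only [abs_mul, abs_of_nonneg (hw _ _)]
        gcongr with i _ j _
        · exact hw i j
        · exact h _ (mem_spectrum_conjDiagonal V b j) _ (mem_spectrum_conjDiagonal U a i)
    _ = ε * ∑ i, ∑ j, w i j * |b j - a i| + K * ∑ i, ∑ j, w i j * (b j - a i) ^ 2 := by
        simp only [mul_add, Finset.sum_add_distrib, Finset.mul_sum, mul_left_comm]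
    _ ≤ _ := by
        rw [sum_unistochastic_mul_sq_sub]
        gcongr
        exact sum_unistochastic_mul_abs_sub_le U V a b

theorem hasFDerivWithinAt_re_trace_cfc {f : ℝ → ℝ} {C : Matrix n n 𝕜} (hC : C.IsHermitian)
    (hf : ∀ x ∈ spectrum ℝ C, DifferentiableAt ℝ f x) :
    HasFDerivWithinAt (fun D => RCLike.re (cfc f D).trace) (reTraceMul (cfc (deriv f) C))
      {D | D.IsHermitian} C := by
  refine .of_isLittleO (Asymptotics.isLittleO_iff.2 fun ε hε => ?_)
  set N : ℝ := √(Fintype.card n)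
  obtain ⟨K, hK⟩ := exists_eventually_abs_sub_deriv_mul_le C.finite_real_spectrum hf
    (ε := ε / (2 * (N + 1))) (by positivity)
  have hspec := (upperHemicontinuous_spectrum ℝ (Matrix n n 𝕜)).upperHemicontinuousAt C _ hK
  have hsmall : ∀ᶠ D in 𝓝 C, K * ‖D - C‖ < ε / 2 :=
    ContinuousAt.eventually_lt (by fun_prop) (by fun_prop) (by simpa using half_pos hε)
  filter_upwards [self_mem_nhdsWithin, hspec.filter_mono nhdsWithin_le_nhds,
    hsmall.filter_mono nhdsWithin_le_nhds] with D hD hD' hDK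
  have hN : ε / (2 * (N + 1)) * N ≤ ε / 2 := by
    rw [div_mul_eq_mul_div, div_le_div_iff₀ (by positivity) two_pos]
    nlinarith
  calc |_| ≤ ε / (2 * (N + 1)) * (N * ‖D - C‖) + K * ‖D - C‖ ^ 2 :=
        abs_re_trace_cfc_sub_sub_le hC hD (by positivity) fun y hy => subset_of_mem_nhdsSet hD' hy
    _ = (ε / (2 * (N + 1)) * N + K * ‖D - C‖) * ‖D - C‖ := by ring
    _ ≤ (ε / 2 + ε / 2) * ‖D - C‖ := by gcongr
    _ = ε * ‖D - C‖ := by rw [add_halves]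

end TraceDerivative

section Criticality

variable {n 𝕜 : Type*} [Fintype n] [RCLike 𝕜]

lemma isHermitian_mul_mul_self {S B : Matrix n n 𝕜} (hS : S.IsHermitian) (hB : B.IsHermitian) :
    (S * B * S).IsHermitian := by
  simpa only [hS.eq] using isHermitian_mul_mul_conjTranspose S hB

variable [DecidableEq n]

open scoped Matrix.Norms.Frobenius

lemma compactSpace_unitaryGroup_s7 : CompactSpace (unitaryGroup n 𝕜) := by
  have : ProperSpace (Matrix n n 𝕜) := FiniteDimensional.proper ℝ _
  have hbdd : Bornology.IsBounded (unitaryGroup n 𝕜 : Set (Matrix n n 𝕜)) := by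
    refine (Metric.isBounded_closedBall (x := 0) (r := √(Fintype.card n))).subset fun U hU => ?_
    rw [mem_closedBall_zero_iff, ← Real.sqrt_sq (norm_nonneg U), frobenius_norm_sq_eq_re_trace,
      ← star_eq_conjTranspose, mem_unitaryGroup_iff'.1 hU, trace_one, RCLike.natCast_re]
  exact isCompact_iff_compactSpace.1 (Metric.isCompact_of_isClosed_isBounded isClosed_unitary hbdd)

/-- The functional `W ↦ re tr f(S (W A W*) S)` on the unitary group. -/
noncomputable def sandwichTrace (f : ℝ → ℝ) (S A : Matrix n n 𝕜) (W : unitaryGroup n 𝕜) : ℝ :=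
  RCLike.re (cfc f (S * conjStarAlgAut 𝕜 _ W A * S)).trace

lemma isHermitian_conjStarAlgAut {A : Matrix n n 𝕜} (hA : A.IsHermitian) (W : unitaryGroup n 𝕜) :
    (conjStarAlgAut 𝕜 _ W A).IsHermitian :=
  isHermitian_mul_mul_conjTranspose _ hA

lemma continuous_sandwichTrace {f : ℝ → ℝ} {S A : Matrix n n 𝕜} (hS : S.IsHermitian)
    (hA : A.IsHermitian)
    (hf : ∀ W : unitaryGroup n 𝕜, ∀ x ∈ spectrum ℝ (S * conjStarAlgAut 𝕜 _ W A * S),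
      DifferentiableAt ℝ f x) :
    Continuous (sandwichTrace f S A) := by
  have hcont : ContinuousOn (fun D : Matrix n n 𝕜 => RCLike.re (cfc f D).trace)
      (Set.range fun W => S * conjStarAlgAut 𝕜 _ W A * S) := by
    rintro _ ⟨W, rfl⟩
    have hherm := isHermitian_mul_mul_self hS (isHermitian_conjStarAlgAut hA W)
    refine (hasFDerivWithinAt_re_trace_cfc hherm (hf W)).continuousWithinAt.mono ?_
    rintro _ ⟨W', rfl⟩
    exact isHermitian_mul_mul_self hS (isHermitian_conjStarAlgAut hA W')
  refine hcont.comp_continuous ?_ fun W => Set.mem_range_self W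
  simp only [conjStarAlgAut_apply]
  fun_prop

/-- The exponential of a skew-adjoint matrix as a unitary matrix; `t ↦ exp (t X)` is the
one-parameter group along which functionals of a unitary matrix are varied. -/
noncomputable def expUnitaryGroup (X : skewAdjoint (Matrix n n 𝕜)) : unitaryGroup n 𝕜 :=
  ⟨NormedSpace.exp (X : Matrix n n 𝕜), NormedSpace.exp_mem_unitary_of_mem_skewAdjoint X.2⟩

lemma expUnitaryGroup_zero : expUnitaryGroup (0 : skewAdjoint (Matrix n n 𝕜)) = 1 :=
  Subtype.ext NormedSpace.exp_zero

lemma continuous_expUnitaryGroup : Continuous (expUnitaryGroup (n := n) (𝕜 := 𝕜)) :=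
  (NormedSpace.exp_continuous.comp continuous_subtype_val).subtype_mk _

lemma hasDerivAt_conjStarAlgAut_expUnitaryGroup (X : skewAdjoint (Matrix n n 𝕜))
    (B : Matrix n n 𝕜) :
    HasDerivAt (fun t : ℝ => conjStarAlgAut 𝕜 _ (expUnitaryGroup (t • X)) B) (X * B - B * X) 0 := by
  have hexp : HasDerivAt (fun t : ℝ => NormedSpace.exp (t • (X : Matrix n n 𝕜))) X 0 := by
    simpa using! hasDerivAt_exp_smul_const (𝕂 := ℝ) (X : Matrix n n 𝕜) 0
  have hX : star (X : Matrix n n 𝕜) = -X := X.2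
  simpa [hX, sub_eq_add_neg] using! (hexp.mul_const B).mul hexp.star

lemma hasDerivAt_sandwichTrace_expUnitaryGroup_mul {f : ℝ → ℝ} {S A : Matrix n n 𝕜}
    (hS : S.IsHermitian) (hA : A.IsHermitian) {W : unitaryGroup n 𝕜}
    (hf : ∀ x ∈ spectrum ℝ (S * conjStarAlgAut 𝕜 _ W A * S), DifferentiableAt ℝ f x)
    (X : skewAdjoint (Matrix n n 𝕜)) :
    HasDerivAt (fun t : ℝ => sandwichTrace f S A (expUnitaryGroup (t • X) * W))
      (reTraceMul (cfc (deriv f) (S * conjStarAlgAut 𝕜 _ W A * S))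
        (S * (X * conjStarAlgAut 𝕜 _ W A - conjStarAlgAut 𝕜 _ W A * X) * S)) 0 := by
  set B := conjStarAlgAut 𝕜 _ W A
  have hcurve : HasDerivAt (fun t : ℝ => S * conjStarAlgAut 𝕜 _ (expUnitaryGroup (t • X) * W) A * S)
      (S * (X * B - B * X) * S) 0 := by
    simp only [conjStarAlgAut_mul_apply]
    exact ((hasDerivAt_conjStarAlgAut_expUnitaryGroup X B).const_mul S).mul_const S
  have htrace := hasFDerivWithinAt_re_trace_cfc
    (isHermitian_mul_mul_self hS (isHermitian_conjStarAlgAut hA W)) hf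
  exact htrace.comp_hasDerivAt_of_eq 0 hcurve
    (.of_forall fun t => isHermitian_mul_mul_self hS (isHermitian_conjStarAlgAut hA _))
    (by rw [zero_smul, expUnitaryGroup_zero, one_mul])

lemma re_trace_mul_commutator {M B : Matrix n n 𝕜} (hM : M.IsHermitian) (hB : B.IsHermitian) :
    RCLike.re (M * ((M * B - B * M) * B - B * (M * B - B * M))).trace = ‖M * B - B * M‖ ^ 2 := by
  rw [frobenius_norm_sq_eq_re_trace, conjTranspose_sub, conjTranspose_mul, conjTranspose_mul,
    hM.eq, hB.eq, sub_mul (B * M), mul_sub, trace_sub, trace_sub]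
  congr 2
  · rw [← mul_assoc, trace_mul_comm, mul_assoc]
  · rw [mul_assoc]

-- The variation direction is the commutator itself, the gradient of the functional, so that the
-- derivative along it is the squared norm of the commutator.
theorem commute_of_isLocalExtr_sandwichTrace {f : ℝ → ℝ} {S A : Matrix n n 𝕜}
    (hS : S.IsHermitian) (hA : A.IsHermitian) {W : unitaryGroup n 𝕜}
    (hf : ∀ x ∈ spectrum ℝ (S * conjStarAlgAut 𝕜 _ W A * S), DifferentiableAt ℝ f x)
    (hW : IsLocalExtr (sandwichTrace f S A) W) :
    Commute (conjStarAlgAut 𝕜 _ W A)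
      (S * cfc (deriv f) (S * conjStarAlgAut 𝕜 _ W A * S) * S) := by
  set B := conjStarAlgAut 𝕜 _ W A
  set D := cfc (deriv f) (S * B * S)
  have hB_herm : B.IsHermitian := isHermitian_conjStarAlgAut hA W
  have hM_herm : (S * D * S).IsHermitian := isHermitian_mul_mul_self hS (cfc_predicate _ _)
  have hX : star (S * D * S * B - B * (S * D * S)) = -(S * D * S * B - B * (S * D * S)) := by
    rw [star_eq_conjTranspose, conjTranspose_sub, conjTranspose_mul,
      conjTranspose_mul _ (S * D * S), hB_herm.eq, hM_herm.eq, neg_sub]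
  let X : skewAdjoint (Matrix n n 𝕜) := ⟨_, hX⟩
  have hcont : Continuous fun t : ℝ => expUnitaryGroup (t • X) * W :=
    (continuous_expUnitaryGroup.comp
      ((continuous_id.smul continuous_const).subtype_mk _)).mul_const W
  have hextr : IsLocalExtr (sandwichTrace f S A ∘ fun t : ℝ => expUnitaryGroup (t • X) * W) 0 :=
    IsLocalExtr.comp_continuous
      (by simpa only [zero_smul, expUnitaryGroup_zero, one_mul] using hW) hcont.continuousAt
  have hnorm : ‖(X : Matrix n n 𝕜)‖ ^ 2 = reTraceMul D (S * (X * B - B * X) * S) := by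
    rw [← re_trace_mul_commutator hM_herm hB_herm, reTraceMul_apply, mul_assoc (S * D),
      mul_assoc S D, trace_mul_comm S]
    simp only [mul_assoc, X]
  rw [hextr.hasDerivAt_eq_zero (hasDerivAt_sandwichTrace_expUnitaryGroup_mul hS hA hf X)] at hnorm
  exact (sub_eq_zero.1 (norm_eq_zero.1 ((pow_eq_zero_iff two_ne_zero).1 hnorm))).symm

end Criticality

section CriticalPower

variable {n 𝕜 : Type*} [Fintype n] [RCLike 𝕜]

lemma posDef_mul_mul_self_s7 {S B : Matrix n n 𝕜} (hS : S.PosDef) (hB : B.PosDef) :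
    (S * B * S).PosDef := by
  classical
  simpa only [hS.1.eq] using
    hB.mul_mul_conjTranspose_same (vecMul_injective_of_isUnit hS.isUnit)

variable [DecidableEq n]

lemma posDef_conjStarAlgAut {A : Matrix n n 𝕜} (hA : A.PosDef) (W : unitaryGroup n 𝕜) :
    (conjStarAlgAut 𝕜 _ W A).PosDef :=
  hA.mul_mul_conjTranspose_same (vecMul_injective_of_isUnit (Unitary.toUnits W).isUnit)

lemma pos_of_mem_spectrum {C : Matrix n n 𝕜} (hC : C.PosDef) {x : ℝ} (hx : x ∈ spectrum ℝ C) :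
    0 < x := by
  rw [hC.1.spectrum_real_eq_range_eigenvalues] at hx
  obtain ⟨i, rfl⟩ := hx
  exact hC.eigenvalues_pos i

lemma commute_of_commute_cfc {g : ℝ → ℝ} {C T : Matrix n n 𝕜} (hC : C.IsHermitian)
    (hg : Set.InjOn g (spectrum ℝ C)) (h : Commute (cfc g C) T) : Commute C T := by
  have hfin := C.finite_real_spectrum
  have hinv : cfc (Function.invFunOn g (spectrum ℝ C)) (cfc g C) = C := by
    rw [← cfc_comp _ _ _ hC.isSelfAdjoint ((hfin.image g).continuousOn _) (hfin.continuousOn _)]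
    exact (cfc_congr hg.leftInvOn_invFunOn).trans (cfc_id ℝ C hC.isSelfAdjoint)
  rw [← hinv]
  exact h.cfc_real _

lemma commute_of_commute_sq {S C : Matrix n n 𝕜} (hS : S.PosDef) (h : Commute (S ^ 2) C) :
    Commute S C := by
  refine commute_of_commute_cfc (g := fun x => x ^ 2) hS.1 (fun x hx y hy hxy => ?_) ?_
  · exact (pow_left_inj₀ (pos_of_mem_spectrum hS hx).le (pos_of_mem_spectrum hS hy).le
      two_ne_zero).1 hxy
  · rwa [cfc_pow_id S 2 hS.1.isSelfAdjoint]

lemma cfc_deriv_rpow_mul_self {C : Matrix n n 𝕜} (hC : C.PosDef) (z : ℝ) :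
    cfc (deriv fun x : ℝ => x ^ z) C * C = cfc (fun x : ℝ => z * x ^ z) C := by
  have hfin := C.finite_real_spectrum
  have hmul := cfc_mul (deriv fun x : ℝ => x ^ z) id C (hfin.continuousOn _) (hfin.continuousOn _)
  rw [cfc_id ℝ C hC.1.isSelfAdjoint] at hmul
  rw [← hmul]
  refine cfc_congr fun x hx => ?_
  have hx := pos_of_mem_spectrum hC hx
  simp only [id, Real.deriv_rpow_const, Real.rpow_sub_one hx.ne']
  field_simp

lemma commute_of_commute_mul_cfc_deriv_rpow {S B : Matrix n n 𝕜} (hS : S.PosDef) (hB : B.PosDef)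
    {z : ℝ} (hz : z ≠ 0)
    (h : Commute B (S * cfc (deriv fun x : ℝ => x ^ z) (S * B * S) * S)) : Commute B S := by
  have hC := posDef_mul_mul_self_s7 hS hB
  set C := S * B * S with hC_def
  set D := cfc (deriv fun x : ℝ => x ^ z) C
  have hCD : Commute C D := ((Commute.refl C).cfc_real _).symm
  have hsq : Commute (cfc (fun x : ℝ => z * x ^ z) C) (S ^ 2) := by
    have hDC : D * C * S ^ 2 = S ^ 2 * (D * C) := by
      calc D * C * S ^ 2 = S * (B * (S * D * S)) * S := by
            rw [← hCD.eq]
            simp only [hC_def, pow_two, mul_assoc]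
        _ = S * (S * D * S * B) * S := by rw [h.eq]
        _ = S ^ 2 * (D * C) := by simp only [hC_def, pow_two, mul_assoc]
    rwa [cfc_deriv_rpow_mul_self hC] at hDC
  have hinj : Set.InjOn (fun x : ℝ => z * x ^ z) (spectrum ℝ C) := fun x hx y hy hxy =>
    Real.rpow_left_injOn hz (pos_of_mem_spectrum hC hx).le (pos_of_mem_spectrum hC hy).le
      (mul_left_cancel₀ hz hxy)
  have hSC : S * C = C * S := commute_of_commute_sq hS (commute_of_commute_cfc hC.1 hinj hsq).symm
  have hcancel : S * (S * B) * S = S * (B * S) * S := by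
    simpa only [hC_def, mul_assoc] using hSC
  exact (hS.isUnit.mul_left_cancel (hS.isUnit.mul_right_cancel hcancel)).symm

theorem commute_of_isLocalExtr_sandwichTrace_rpow {S A : Matrix n n 𝕜} (hS : S.PosDef)
    (hA : A.PosDef) {z : ℝ} (hz : z ≠ 0) {W : unitaryGroup n 𝕜}
    (hW : IsLocalExtr (sandwichTrace (fun x => x ^ z) S A) W) :
    Commute (conjStarAlgAut 𝕜 _ W A) S := by
  have hB := posDef_conjStarAlgAut hA W
  refine commute_of_commute_mul_cfc_deriv_rpow hS hB hz <|
    commute_of_isLocalExtr_sandwichTrace hS.1 hA.1 (fun x hx => ?_) hW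
  exact Real.differentiableAt_rpow_const_of_ne z
    (pos_of_mem_spectrum (posDef_mul_mul_self_s7 hS hB) hx).ne'

end CriticalPower

section Extremes

variable {n 𝕜 : Type*} [Fintype n] [DecidableEq n] [RCLike 𝕜]

lemma continuous_sandwichTrace_rpow {S A : Matrix n n 𝕜} (hS : S.PosDef) (hA : A.PosDef) (z : ℝ) :
    Continuous (sandwichTrace (fun x => x ^ z) S A) :=
  continuous_sandwichTrace hS.1 hA.1 fun W _ hx => Real.differentiableAt_rpow_const_of_ne z
    (pos_of_mem_spectrum (posDef_mul_mul_self_s7 hS (posDef_conjStarAlgAut hA W)) hx).ne'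

lemma sandwichTrace_star (f : ℝ → ℝ) {S A : Matrix n n 𝕜} (hS : S.IsHermitian)
    (hA : A.IsHermitian) (W : unitaryGroup n 𝕜) :
    sandwichTrace f S A (star W) =
      RCLike.re (cfc f (conjStarAlgAut 𝕜 _ W S * A * conjStarAlgAut 𝕜 _ W S)).trace := by
  have hherm := isHermitian_mul_mul_self hS (isHermitian_conjStarAlgAut hA (star W))
  rw [sandwichTrace, ← trace_cfc_conjStarAlgAut f hherm W, map_mul, map_mul,
    ← conjStarAlgAut_mul_apply, Unitary.mul_star_self, map_one, StarAlgEquiv.one_apply]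

lemma sandwichTrace_rpow_pos [Nonempty n] {S A : Matrix n n 𝕜} (hS : S.PosDef) (hA : A.PosDef)
    (z : ℝ) (W : unitaryGroup n 𝕜) : 0 < sandwichTrace (fun x => x ^ z) S A W := by
  have hC := posDef_mul_mul_self_s7 hS (posDef_conjStarAlgAut hA W)
  obtain ⟨V, hV⟩ := exists_eq_conjDiagonal hC.1 1
  rw [sandwichTrace, hV, cfc_conjDiagonal, trace_conjDiagonal, RCLike.ofReal_re]
  exact Finset.sum_pos (fun i _ => Real.rpow_pos_of_pos (hC.eigenvalues_pos _) z)
    Finset.univ_nonempty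

lemma exists_eq_sum_perm_of_doublyStochastic {w : Matrix n n ℝ} (hw : w ∈ doublyStochastic ℝ n)
    (f g : n → ℝ) : ∃ c : Equiv.Perm n → ℝ, (∀ σ, 0 ≤ c σ) ∧ ∑ σ, c σ = 1 ∧
      ∑ i, ∑ j, w i j * (f i * g j) = ∑ σ, c σ * ∑ i, f i * g (σ i) := by
  obtain ⟨c, hc0, hc1, rfl⟩ := exists_eq_sum_perm_of_mem_doublyStochastic hw
  refine ⟨c, hc0, hc1, ?_⟩
  simp only [Matrix.sum_apply, Matrix.smul_apply, Equiv.Perm.permMatrix, PEquiv.toMatrix_apply,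
    Equiv.toPEquiv_apply, Option.mem_def, Option.some.injEq, smul_eq_mul, mul_ite, mul_one,
    mul_zero, Finset.sum_mul, Finset.mul_sum]
  rw [Finset.sum_congr rfl fun i _ => Finset.sum_comm, Finset.sum_comm]
  refine Finset.sum_congr rfl fun π _ => Finset.sum_congr rfl fun i _ => ?_
  simp

lemma sum_doublyStochastic_mul_le_of_monovary {w : Matrix n n ℝ} (hw : w ∈ doublyStochastic ℝ n)
    {f g : n → ℝ} (hfg : Monovary f g) :
    ∑ i, ∑ j, w i j * (f i * g j) ≤ ∑ i, f i * g i := by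
  obtain ⟨c, hc0, hc1, hc⟩ := exists_eq_sum_perm_of_doublyStochastic hw f g
  calc ∑ i, ∑ j, w i j * (f i * g j) ≤ ∑ σ, c σ * ∑ i, f i * g i := by
        rw [hc]
        exact Finset.sum_le_sum fun σ _ =>
          mul_le_mul_of_nonneg_left hfg.sum_mul_comp_perm_le_sum_mul (hc0 σ)
    _ = ∑ i, f i * g i := by rw [← Finset.sum_mul, hc1, one_mul]

lemma le_sum_doublyStochastic_mul_of_antivary {w : Matrix n n ℝ} (hw : w ∈ doublyStochastic ℝ n)
    {f g : n → ℝ} (hfg : Antivary f g) :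
    ∑ i, f i * g i ≤ ∑ i, ∑ j, w i j * (f i * g j) := by
  simpa only [Pi.neg_apply, mul_neg, neg_mul, Finset.sum_neg_distrib, neg_le_neg_iff] using
    sum_doublyStochastic_mul_le_of_monovary hw hfg.neg_left

lemma sandwichTrace_conjDiagonal_mul_star (f : ℝ → ℝ) (U V : unitaryGroup n 𝕜) (s a : n → ℝ) :
    sandwichTrace f (conjDiagonal U s) (conjDiagonal V a) (U * star V) =
      ∑ i, f (a i * s i ^ 2) := by
  have hUV : U * star V * V = U := by rw [mul_assoc, Unitary.star_mul_self, mul_one]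
  rw [sandwichTrace, conjStarAlgAut_conjDiagonal, hUV, ← map_mul, ← map_mul, cfc_conjDiagonal,
    trace_conjDiagonal, RCLike.ofReal_re]
  refine Finset.sum_congr rfl fun i _ => congrArg f ?_
  simp only [Pi.mul_apply]
  ring

lemma sandwichTrace_conjDiagonal_of_commute (f : ℝ → ℝ) {U V W : unitaryGroup n 𝕜} {s a : n → ℝ}
    (h : Commute (conjStarAlgAut 𝕜 _ W (conjDiagonal V a)) (conjDiagonal U s)) :
    sandwichTrace f (conjDiagonal U s) (conjDiagonal V a) W =
      ∑ i, ∑ j, unistochastic (star (W * V) * U) i j * f (a i * s j ^ 2) := by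
  rw [conjStarAlgAut_conjDiagonal] at h
  have hsq : Commute (conjDiagonal (W * V) a) (conjDiagonal U (s ^ 2)) := by
    rw [map_pow]; exact h.pow_right 2
  rw [sandwichTrace, conjStarAlgAut_conjDiagonal, ← h.eq, mul_assoc, ← pow_two, ← map_pow,
    trace_cfc_mul_of_commute f hsq, RCLike.ofReal_re]
  rfl

lemma sandwichTrace_rpow_of_isLocalExtr {U V W : unitaryGroup n 𝕜} {s a : n → ℝ}
    (hs : ∀ i, 0 < s i) (ha : ∀ i, 0 < a i) {z : ℝ} (hz : z ≠ 0)
    (hW : IsLocalExtr (sandwichTrace (fun x => x ^ z) (conjDiagonal U s) (conjDiagonal V a)) W) :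
    sandwichTrace (fun x => x ^ z) (conjDiagonal U s) (conjDiagonal V a) W =
      ∑ i, ∑ j, unistochastic (star (W * V) * U) i j * (a i ^ z * (s j ^ 2) ^ z) := by
  have hcomm := commute_of_isLocalExtr_sandwichTrace_rpow (posDef_conjDiagonal U hs)
    (posDef_conjDiagonal V ha) hz hW
  simp only [sandwichTrace_conjDiagonal_of_commute _ hcomm,
    Real.mul_rpow (ha _).le (sq_nonneg (s _))]

lemma sum_rpow_mem_range_sandwichTrace (U V : unitaryGroup n 𝕜) {s a : n → ℝ}
    (ha : ∀ i, 0 < a i) (z : ℝ) :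
    ∑ i, a i ^ z * (s i ^ 2) ^ z ∈
      Set.range (sandwichTrace (fun x => x ^ z) (conjDiagonal U s) (conjDiagonal V a)) := by
  refine ⟨U * star V, ?_⟩
  simp only [sandwichTrace_conjDiagonal_mul_star, Real.mul_rpow (ha _).le (sq_nonneg (s _))]

theorem isGreatest_range_sandwichTrace_rpow (U V : unitaryGroup n 𝕜) {s a : n → ℝ}
    (hs : ∀ i, 0 < s i) (ha : ∀ i, 0 < a i) {z : ℝ} (hz : z ≠ 0)
    (h : Monovary (fun i => a i ^ z) fun i => (s i ^ 2) ^ z) :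
    IsGreatest (Set.range (sandwichTrace (fun x => x ^ z) (conjDiagonal U s) (conjDiagonal V a)))
      (∑ i, a i ^ z * (s i ^ 2) ^ z) := by
  refine ⟨sum_rpow_mem_range_sandwichTrace U V ha z, ?_⟩
  have := compactSpace_unitaryGroup_s7 (n := n) (𝕜 := 𝕜)
  have hcont :=
    continuous_sandwichTrace_rpow (posDef_conjDiagonal U hs) (posDef_conjDiagonal V ha) z
  obtain ⟨W, -, hW⟩ := isCompact_univ.exists_isMaxOn Set.univ_nonempty hcont.continuousOn
  rintro _ ⟨W', rfl⟩
  refine (hW (Set.mem_univ W')).trans ?_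
  rw [sandwichTrace_rpow_of_isLocalExtr hs ha hz (.inr (hW.isLocalMax univ_mem))]
  exact sum_doublyStochastic_mul_le_of_monovary (unistochastic_mem_doublyStochastic _) h

theorem isLeast_range_sandwichTrace_rpow (U V : unitaryGroup n 𝕜) {s a : n → ℝ}
    (hs : ∀ i, 0 < s i) (ha : ∀ i, 0 < a i) {z : ℝ} (hz : z ≠ 0)
    (h : Antivary (fun i => a i ^ z) fun i => (s i ^ 2) ^ z) :
    IsLeast (Set.range (sandwichTrace (fun x => x ^ z) (conjDiagonal U s) (conjDiagonal V a)))
      (∑ i, a i ^ z * (s i ^ 2) ^ z) := by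
  refine ⟨sum_rpow_mem_range_sandwichTrace U V ha z, ?_⟩
  have := compactSpace_unitaryGroup_s7 (n := n) (𝕜 := 𝕜)
  have hcont :=
    continuous_sandwichTrace_rpow (posDef_conjDiagonal U hs) (posDef_conjDiagonal V ha) z
  obtain ⟨W, -, hW⟩ := isCompact_univ.exists_isMinOn Set.univ_nonempty hcont.continuousOn
  rintro _ ⟨W', rfl⟩
  refine le_trans ?_ (hW (Set.mem_univ W'))
  rw [sandwichTrace_rpow_of_isLocalExtr hs ha hz (.inl (hW.isLocalMin univ_mem))]
  exact le_sum_doublyStochastic_mul_of_antivary (unistochastic_mem_doublyStochastic _) h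

end Extremes

section Renyi

variable {d : ℕ}

lemma mpow_eq_cfc {A : Matrix (Fin d) (Fin d) ℂ} (hA : A.IsHermitian) (t : ℝ) :
    mpow A t = cfc (fun x : ℝ => x ^ t) A := by
  rw [mpow, dif_pos hA, hA.cfc_eq, Matrix.IsHermitian.cfc, conjStarAlgAut_apply]
  rfl

lemma mpow_conjDiagonal (V : unitaryGroup (Fin d) ℂ) (a : Fin d → ℝ) (t : ℝ) :
    mpow (conjDiagonal V a) t = conjDiagonal V fun i => a i ^ t := by
  rw [mpow_eq_cfc (isHermitian_conjDiagonal V a), cfc_conjDiagonal]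
  rfl

lemma exists_eq_conjDiagonal_eigUp {A : Matrix (Fin d) (Fin d) ℂ} (hA : A.IsHermitian) :
    ∃ V, A = conjDiagonal V (eigUp hA) :=
  exists_eq_conjDiagonal hA (Tuple.sort hA.eigenvalues)

lemma exists_eq_conjDiagonal_eigDown {A : Matrix (Fin d) (Fin d) ℂ} (hA : A.IsHermitian) :
    ∃ V, A = conjDiagonal V (eigDown hA) :=
  exists_eq_conjDiagonal hA (Fin.revPerm.trans (Tuple.sort hA.eigenvalues))

lemma monotone_eigUp {A : Matrix (Fin d) (Fin d) ℂ} (hA : A.IsHermitian) : Monotone (eigUp hA) :=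
  Tuple.monotone_sort _

lemma antitone_eigDown {A : Matrix (Fin d) (Fin d) ℂ} (hA : A.IsHermitian) :
    Antitone (eigDown hA) :=
  fun _ _ hij => monotone_eigUp hA (Fin.rev_le_rev.2 hij)

lemma eigUp_pos_s7 {A : Matrix (Fin d) (Fin d) ℂ} (hA : A.PosDef) (i : Fin d) : 0 < eigUp hA.1 i :=
  hA.eigenvalues_pos _

lemma eigDown_pos_s7 {A : Matrix (Fin d) (Fin d) ℂ} (hA : A.PosDef) (i : Fin d) :
    0 < eigDown hA.1 i :=
  hA.eigenvalues_pos _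

lemma div_sub_one_mul_log_rpow_one_div {α x : ℝ} (hα : α ≠ 0) (hx : 0 < x) :
    α / (α - 1) * Real.log (x ^ (1 / α)) = (α - 1)⁻¹ * Real.log x := by
  rw [Real.log_rpow hx]
  field_simp

lemma SazC_eq_log_sum [NeZero d] {p q : Fin d → ℝ} (hp : ∀ i, 0 < p i) (hq : ∀ i, 0 < q i) {α : ℝ}
    (hα : α ≠ 0) : SazC p q α = (α - 1)⁻¹ * Real.log (∑ i, p i ^ α * q i ^ (1 - α)) :=
  div_sub_one_mul_log_rpow_one_div hα <| Finset.sum_pos (fun i _ => mul_pos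
    (Real.rpow_pos_of_pos (hp i) _) (Real.rpow_pos_of_pos (hq i) _)) Finset.univ_nonempty

lemma mpow_posDef {A : Matrix (Fin d) (Fin d) ℂ} (hA : A.PosDef) (t : ℝ) : (mpow A t).PosDef := by
  obtain ⟨V, hV⟩ := exists_eq_conjDiagonal_eigUp hA.1
  rw [hV, mpow_conjDiagonal]
  exact posDef_conjDiagonal V fun i => Real.rpow_pos_of_pos (eigUp_pos_s7 hA i) t

lemma mpow_conjStarAlgAut {A : Matrix (Fin d) (Fin d) ℂ} (hA : A.IsHermitian) (t : ℝ)
    (W : unitaryGroup (Fin d) ℂ) :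
    mpow (conjStarAlgAut ℂ _ W A) t = conjStarAlgAut ℂ _ W (mpow A t) := by
  obtain ⟨V, hV⟩ := exists_eq_conjDiagonal_eigUp hA
  rw [hV]
  simp only [mpow_conjDiagonal, conjStarAlgAut_conjDiagonal]

lemma Saz_eq_log_sandwichTrace [NeZero d] {ρ σ : Matrix (Fin d) (Fin d) ℂ} (hρ : ρ.PosDef)
    (hσ : σ.PosDef) {α : ℝ} (hα : α ≠ 0) (z : ℝ) (U : unitaryGroup (Fin d) ℂ) :
    Saz ρ (conjStarAlgAut ℂ _ U σ) α z = (α - 1)⁻¹ * Real.log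
      (sandwichTrace (fun x => x ^ z) (mpow σ ((1 - α) / (2 * z))) (mpow ρ (α / z)) (star U)) := by
  have hS := mpow_posDef hσ ((1 - α) / (2 * z))
  have hA := mpow_posDef hρ (α / z)
  have hherm := isHermitian_mul_mul_self (isHermitian_conjStarAlgAut hS.1 U) hA.1
  have hpos := sandwichTrace_rpow_pos hS hA z (star U)
  rw [← div_sub_one_mul_log_rpow_one_div hα hpos, sandwichTrace_star _ hS.1 hA.1, Saz, Faz,
    mpow_conjStarAlgAut hσ.1, mpow_eq_cfc hherm]
  rfl

lemma setOf_Saz_eq_image [NeZero d] {ρ σ : Matrix (Fin d) (Fin d) ℂ} (hρ : ρ.PosDef)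
    (hσ : σ.PosDef) {α : ℝ} (hα : α ≠ 0) (z : ℝ) :
    {x : ℝ | ∃ U ∈ unitaryGroup (Fin d) ℂ, x = Saz ρ (U * σ * star U) α z} =
      (fun T => (α - 1)⁻¹ * Real.log T) '' Set.range
        (sandwichTrace (fun x => x ^ z) (mpow σ ((1 - α) / (2 * z))) (mpow ρ (α / z))) := by
  rw [← Set.range_comp, ← star_involutive.surjective.range_comp]
  ext x
  constructor
  · rintro ⟨U, hU, rfl⟩
    exact ⟨⟨U, hU⟩, (Saz_eq_log_sandwichTrace hρ hσ hα z ⟨U, hU⟩).symm⟩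
  · rintro ⟨U, rfl⟩
    exact ⟨U, U.2, (Saz_eq_log_sandwichTrace hρ hσ hα z U).symm⟩

lemma rpow_div_two_mul_sq_rpow {q : ℝ} (hq : 0 < q) (r : ℝ) {z : ℝ} (hz : z ≠ 0) :
    ((q ^ (r / (2 * z))) ^ 2) ^ z = q ^ r := by
  rw [← Real.rpow_natCast, ← Real.rpow_mul hq.le, ← Real.rpow_mul hq.le]
  congr 1
  field_simp
  norm_num

lemma rpow_div_rpow {p : ℝ} (hp : 0 < p) (r : ℝ) {z : ℝ} (hz : z ≠ 0) :
    (p ^ (r / z)) ^ z = p ^ r := by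
  rw [← Real.rpow_mul hp.le, div_mul_cancel₀ r hz]

lemma antitone_eigDown_rpow {A : Matrix (Fin d) (Fin d) ℂ} (hA : A.PosDef) {r : ℝ} (hr : 0 ≤ r) :
    Antitone fun i => eigDown hA.1 i ^ r :=
  fun _ j hij => Real.rpow_le_rpow (eigDown_pos_s7 hA j).le (antitone_eigDown hA.1 hij) hr

lemma isGreatest_range_sandwichTrace_mpow {ρ σ : Matrix (Fin d) (Fin d) ℂ} (hρ : ρ.PosDef)
    (hσ : σ.PosDef) {α z : ℝ} (hα : 1 ≤ α) (hz : z ≠ 0) :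
    IsGreatest (Set.range
        (sandwichTrace (fun x => x ^ z) (mpow σ ((1 - α) / (2 * z))) (mpow ρ (α / z))))
      (∑ i, eigDown hρ.1 i ^ α * eigUp hσ.1 i ^ (1 - α)) := by
  have hq : Antitone fun i => eigUp hσ.1 i ^ (1 - α) := fun i _ hij =>
    Real.rpow_le_rpow_of_nonpos (eigUp_pos_s7 hσ i) (monotone_eigUp hσ.1 hij) (sub_nonpos.2 hα)
  have hmono := (antitone_eigDown_rpow hρ (zero_le_one.trans hα)).monovary hq
  obtain ⟨U, hU⟩ := exists_eq_conjDiagonal_eigUp hσ.1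
  obtain ⟨V, hV⟩ := exists_eq_conjDiagonal_eigDown hρ.1
  have h := isGreatest_range_sandwichTrace_rpow U V
    (fun i => Real.rpow_pos_of_pos (eigUp_pos_s7 hσ i) ((1 - α) / (2 * z)))
    (fun i => Real.rpow_pos_of_pos (eigDown_pos_s7 hρ i) (α / z)) hz
  simp only [rpow_div_two_mul_sq_rpow (eigUp_pos_s7 hσ _) _ hz,
    rpow_div_rpow (eigDown_pos_s7 hρ _) _ hz, ← mpow_conjDiagonal, ← hU, ← hV] at h
  exact h hmono

lemma isLeast_range_sandwichTrace_mpow {ρ σ : Matrix (Fin d) (Fin d) ℂ} (hρ : ρ.PosDef)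
    (hσ : σ.PosDef) {α z : ℝ} (hα₀ : 0 ≤ α) (hα₁ : α ≤ 1) (hz : z ≠ 0) :
    IsLeast (Set.range
        (sandwichTrace (fun x => x ^ z) (mpow σ ((1 - α) / (2 * z))) (mpow ρ (α / z))))
      (∑ i, eigDown hρ.1 i ^ α * eigUp hσ.1 i ^ (1 - α)) := by
  have hq : Monotone fun i => eigUp hσ.1 i ^ (1 - α) := fun i _ hij =>
    Real.rpow_le_rpow (eigUp_pos_s7 hσ i).le (monotone_eigUp hσ.1 hij) (sub_nonneg.2 hα₁)
  have hanti := (antitone_eigDown_rpow hρ hα₀).antivary hq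
  obtain ⟨U, hU⟩ := exists_eq_conjDiagonal_eigUp hσ.1
  obtain ⟨V, hV⟩ := exists_eq_conjDiagonal_eigDown hρ.1
  have h := isLeast_range_sandwichTrace_rpow U V
    (fun i => Real.rpow_pos_of_pos (eigUp_pos_s7 hσ i) ((1 - α) / (2 * z)))
    (fun i => Real.rpow_pos_of_pos (eigDown_pos_s7 hρ i) (α / z)) hz
  simp only [rpow_div_two_mul_sq_rpow (eigUp_pos_s7 hσ _) _ hz,
    rpow_div_rpow (eigDown_pos_s7 hρ _) _ hz, ← mpow_conjDiagonal, ← hU, ← hV] at h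
  exact h hanti

theorem stmt_7_general [NeZero d] {ρ σ : Matrix (Fin d) (Fin d) ℂ} (hρ : ρ.PosDef)
    (hσ : σ.PosDef) {α z : ℝ} (hα₀ : 0 < α) (hα₁ : α ≠ 1) (hz : z ≠ 0) :
    IsGreatest {x : ℝ | ∃ U ∈ unitaryGroup (Fin d) ℂ, x = Saz ρ (U * σ * star U) α z}
      (SazC (eigDown hρ.1) (eigUp hσ.1) α) := by
  rw [setOf_Saz_eq_image hρ hσ hα₀.ne', SazC_eq_log_sum (eigDown_pos_s7 hρ) (eigUp_pos_s7 hσ) hα₀.ne']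
  have hpos : Set.range (sandwichTrace (fun x => x ^ z) (mpow σ ((1 - α) / (2 * z)))
      (mpow ρ (α / z))) ⊆ Set.Ioi 0 :=
    Set.range_subset_iff.2 fun W => sandwichTrace_rpow_pos (mpow_posDef hσ _) (mpow_posDef hρ _) z W
  have hlog := Real.strictMonoOn_log.monotoneOn.mono hpos
  rcases hα₁.lt_or_gt with hα | hα
  · have hanti : AntitoneOn (fun T => (α - 1)⁻¹ * Real.log T) _ := fun _ hx _ hy hxy =>
      mul_le_mul_of_nonpos_left (hlog hx hy hxy) (inv_nonpos.2 (sub_nonpos.2 hα.le))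
    exact hanti.map_isLeast (isLeast_range_sandwichTrace_mpow hρ hσ hα₀.le hα.le hz)
  · have hmono : MonotoneOn (fun T => (α - 1)⁻¹ * Real.log T) _ := fun _ hx _ hy hxy =>
      mul_le_mul_of_nonneg_left (hlog hx hy hxy) (inv_nonneg.2 (sub_nonneg.2 hα.le))
    exact hmono.map_isGreatest (isGreatest_range_sandwichTrace_mpow hρ hσ hα.le hz)

end Renyi

/-- for positive definite density matrices `ρ, σ` and `(α,z)` with either
`α, z ∈ (0,1)` or `α ∈ (1,∞), z ∈ (0,∞)`, the maximum of `S_{α,z}(ρ‖UσU*)` over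
unitaries `U` equals `S_α^C(λ↓(ρ)‖λ↑(σ))`. -/
theorem stmt_7 {d : ℕ} (ρ σ : Matrix (Fin d) (Fin d) ℂ)
    (hρ : ρ.PosDef) (hσ : σ.PosDef) (hρ1 : ρ.trace = 1) (hσ1 : σ.trace = 1)
    (α z : ℝ)
    (hαz : (α ∈ Set.Ioo (0 : ℝ) 1 ∧ z ∈ Set.Ioo (0 : ℝ) 1) ∨ (1 < α ∧ 0 < z)) :
    IsGreatest {x : ℝ | ∃ U ∈ Matrix.unitaryGroup (Fin d) ℂ,
        x = Saz ρ (U * σ * star U) α z}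
      (SazC (eigDown hρ.1) (eigUp hσ.1) α) := by
  have : NeZero d := ⟨by rintro rfl; simp [trace] at hρ1⟩
  rcases hαz with ⟨⟨hα₀, hα₁⟩, hz, -⟩ | ⟨hα, hz⟩
  · exact stmt_7_general hρ hσ hα₀ hα₁.ne hz.ne'
  · exact stmt_7_general hρ hσ (one_pos.trans hα) hα.ne' hz.ne'
end
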